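/- arXiv:math/9205206 — 3 statements merged into one kernel-verified Lean document; each statement's English description precedes it below -/
import Mathlib

section
/- Let ‖·‖_X be an admissible extended-value quasinorm on the Borel functions of a compact Hausdorff space Ω which is p-normable (‖f + g‖_X^p ≤ ‖f‖_X^p + ‖g‖_X^p for all f, g) and satisfies a crude lower q-estimate for some q < ∞. Then there is a finite Borel measure μ on Ω such that for every Borel function f, ‖f‖_X = 0 if and only if f = 0 μ-almost everywhere. -/
open Set Filter Topology MeasureTheory ENNReal

/-- An admissible extended-value quasinorm on the Borel functions of `Ω`. -/
structure AdmissibleQuasinorm (Ω : Type*) [TopologicalSpace Ω] [MeasurableSpace Ω] where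
  N : (Ω → ℝ) → ℝ≥0∞
  mono : ∀ f g : Ω → ℝ, Measurable f → Measurable g →
    (∀ x, |f x| ≤ |g x|) → N f ≤ N g
  smul : ∀ (α : ℝ) (f : Ω → ℝ), Measurable f →
    N (fun x => α * f x) = ENNReal.ofReal |α| * N f
  quasi : ∃ C : ℝ≥0∞, ∀ f g : Ω → ℝ, Measurable f → Measurable g →
    (∀ x, 0 ≤ f x) → (∀ x, 0 ≤ g x) → (∀ x, f x = 0 ∨ g x = 0) →
    N (fun x => f x + g x) ≤ C * (N f + N g)
  exists_pos : ∃ u : Ω → ℝ, Measurable u ∧ (∀ x, 0 < u x) ∧ 0 < N u ∧ N u < ⊤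
  (cont : ∀ (f : ℕ → Ω → ℝ) (g : Ω → ℝ), (∀ n, Measurable (f n)) → Measurable g →
    (∀ n x, 0 ≤ f n x) → (∀ n x, f n x ≤ f (n + 1) x) →
    (∀ x, Tendsto (fun n => f n x) atTop (𝓝 (g x))) →
    Tendsto (fun n => N (f n)) atTop (𝓝 (N g)))

/-- `f₁, …, fₙ` are disjointly supported. -/
def DisjSupp {Ω : Type*} {n : ℕ} (f : Fin n → Ω → ℝ) : Prop :=
  ∀ i j, i ≠ j → ∀ x, f i x = 0 ∨ f j x = 0

/-- A crude upper `p`-estimate with constant `a`. -/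
def CrudeUpper {Ω : Type*} [TopologicalSpace Ω] [MeasurableSpace Ω]
    (X : AdmissibleQuasinorm Ω) (p a : ℝ) : Prop :=
  ∀ (n : ℕ) (f : Fin n → Ω → ℝ), (∀ i, Measurable (f i)) → DisjSupp f →
    X.N (fun x => ∑ i, f i x) ≤ ENNReal.ofReal a * (∑ i, X.N (f i) ^ p) ^ (1 / p)

/-- A crude lower `q`-estimate with constant `b`. -/
def CrudeLower {Ω : Type*} [TopologicalSpace Ω] [MeasurableSpace Ω]
    (X : AdmissibleQuasinorm Ω) (q b : ℝ) : Prop :=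
  ∀ (n : ℕ) (f : Fin n → Ω → ℝ), (∀ i, Measurable (f i)) → DisjSupp f →
    (∑ i, X.N (f i) ^ q) ^ (1 / q) ≤ ENNReal.ofReal b * X.N (fun x => ∑ i, f i x)


lemma aux_pow_le (k : ℕ) : k ^ k ≤ 3 ^ k * k.factorial := by
  have h := Real.pow_div_factorial_le_exp (k : ℝ) (by positivity) k
  have h2 : Real.exp (k : ℝ) ≤ 3 ^ k := by
    have : Real.exp (k : ℝ) = Real.exp 1 ^ k := by
      rw [← Real.exp_nat_mul]; simp
    rw [this]
    exact pow_le_pow_left₀ (Real.exp_pos _).le (Real.exp_one_lt_three).le k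
  have h3 : (0 : ℝ) < k.factorial := by positivity
  rw [div_le_iff₀ h3] at h
  have : (k : ℝ) ^ k ≤ 3 ^ k * k.factorial := h.trans (by gcongr)
  exact_mod_cast this

lemma aux_choose (n k : ℕ) : n.choose k * k ^ k ≤ 3 ^ k * n ^ k := by
  have h1 : k.factorial * n.choose k ≤ n ^ k := by
    rw [← Nat.descFactorial_eq_factorial_mul_choose]
    exact Nat.descFactorial_le_pow n k
  calc n.choose k * k ^ k ≤ n.choose k * (3 ^ k * k.factorial) := by gcongr; exact aux_pow_le k
    _ = 3 ^ k * (k.factorial * n.choose k) := by ring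
    _ ≤ _ := by gcongr

lemma aux_term (T P k : ℕ) (h : 27 * T * k ≤ P) (hk : k ≤ T * P) :
    3 ^ k * ((T * P).choose k * P.choose k * (k ^ 3) ^ k * (P ^ 3) ^ (T * P - k))
      ≤ (P ^ 3) ^ (T * P) := by
  have e : (P ^ 3) ^ (T * P) = (P ^ 3) ^ k * (P ^ 3) ^ (T * P - k) := by
    rw [← pow_add]; congr 1; omega
  rw [e]
  have h1 := aux_choose (T * P) k
  have h2 := aux_choose P k
  calc 3 ^ k * ((T * P).choose k * P.choose k * (k ^ 3) ^ k * (P ^ 3) ^ (T * P - k))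
      = 3 ^ k * (((T * P).choose k * k ^ k) * (P.choose k * k ^ k) * k ^ k)
          * (P ^ 3) ^ (T * P - k) := by
        rw [← pow_mul, mul_comm 3 k, pow_mul]; ring
    _ ≤ 3 ^ k * ((3 ^ k * (T * P) ^ k) * (3 ^ k * P ^ k) * k ^ k) * (P ^ 3) ^ (T * P - k) := by
        gcongr
    _ = (P ^ 2) ^ k * (27 * T * k) ^ k * (P ^ 3) ^ (T * P - k) := by
        congr 1
        simp only [← mul_pow]; congr 1; ring
    _ ≤ (P ^ 2) ^ k * P ^ k * (P ^ 3) ^ (T * P - k) := by gcongr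
    _ = _ := by congr 1; simp only [← mul_pow]; congr 1

lemma aux_geom (K : ℕ) : ∑ k ∈ Finset.Icc 1 K, ((1 : ℝ) / 3) ^ k < 1 := by
  have : ∑ k ∈ Finset.Icc 1 K, ((1 : ℝ) / 3) ^ k = 1 / 2 - 1 / 2 * (1 / 3) ^ K := by
    induction K with
    | zero => simp
    | succ n ih => rw [Finset.sum_Icc_succ_top (by omega), ih]; ring
  rw [this]
  have : (0 : ℝ) < (1 / 3) ^ K := by positivity
  linarith

lemma exists_graph (T P K : ℕ) (hT : 0 < T) (hP : 0 < P) (h : 27 * T * K ≤ P) :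
    ∃ g : (Fin P × Fin T) → Fin 3 → Fin P, ∀ I : Finset (Fin P × Fin T), I.card ≤ K →
      I.card ≤ (I.biUnion (fun i => Finset.univ.image (g i))).card := by
  classical
  by_contra hcon
  push Not at hcon
  have hKP : K ≤ P := by nlinarith
  let G (I : Finset (Fin P × Fin T)) (J : Finset (Fin P)) :
      Finset ((Fin P × Fin T) → Fin 3 → Fin P) :=
    Fintype.piFinset fun i => Fintype.piFinset fun _ => if i ∈ I then J else Finset.univ
  have hG : ∀ I J, (G I J).card = (J.card ^ 3) ^ I.card * (P ^ 3) ^ (T * P - I.card) := by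
    intro I J
    simp only [G, Fintype.card_piFinset, Finset.prod_const, Finset.card_univ, Fintype.card_fin]
    have : ∀ i, (if i ∈ I then J else Finset.univ).card ^ 3
        = if i ∈ I then J.card ^ 3 else P ^ 3 := by
      intro i; split_ifs <;> simp
    simp only [this]
    rw [Finset.prod_ite]
    simp only [Finset.prod_const]
    congr 2
    · congr 1; ext; simp
    · have : Finset.univ.filter (fun i => i ∉ I) = Iᶜ := by ext; simp
      rw [this, Finset.card_compl]; simp [mul_comm]
  have hcover : (Finset.univ : Finset ((Fin P × Fin T) → Fin 3 → Fin P)) ⊆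
      (Finset.Icc 1 K).biUnion fun k => (Finset.powersetCard k Finset.univ).biUnion fun I =>
        (Finset.powersetCard k Finset.univ).biUnion fun J => G I J := by
    intro g _
    obtain ⟨I, hI, hI2⟩ := hcon g
    obtain ⟨J, hJ1, hJ2⟩ := Finset.exists_superset_card_eq hI2.le
      (by simpa using hI.trans hKP)
    simp only [Finset.mem_biUnion, Finset.mem_powersetCard, Finset.mem_Icc]
    refine ⟨I.card, ⟨by omega, hI⟩, I, ⟨Finset.subset_univ _, rfl⟩, J,
      ⟨Finset.subset_univ _, hJ2⟩, ?_⟩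
    simp only [G, Fintype.mem_piFinset]
    intro i a
    split_ifs with hi
    · apply hJ1
      simp only [Finset.mem_biUnion, Finset.mem_image, Finset.mem_univ, true_and]
      exact ⟨i, hi, a, rfl⟩
    · simp
  have hcard := Finset.card_le_card hcover
  have htot : (Finset.univ : Finset ((Fin P × Fin T) → Fin 3 → Fin P)).card
      = (P ^ 3) ^ (T * P) := by
    simp [Finset.card_univ, mul_comm]
  rw [htot] at hcard
  have hb : ∀ k ∈ Finset.Icc 1 K, ((((Finset.powersetCard k Finset.univ).biUnion fun I =>
        (Finset.powersetCard k Finset.univ).biUnion fun J => G I J).card : ℕ) : ℝ)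
        ≤ (1 / 3) ^ k * (((P ^ 3) ^ (T * P) : ℕ) : ℝ) := by
    intro k hk
    rw [Finset.mem_Icc] at hk
    have h1 : ((Finset.powersetCard k Finset.univ).biUnion fun I =>
        (Finset.powersetCard k Finset.univ).biUnion fun J => G I J).card
        ≤ (T * P).choose k * P.choose k * (k ^ 3) ^ k * (P ^ 3) ^ (T * P - k) := by
      have : ∀ I ∈ Finset.powersetCard k (Finset.univ : Finset (Fin P × Fin T)),
          ((Finset.powersetCard k Finset.univ).biUnion fun J => G I J).card
            ≤ P.choose k * ((k ^ 3) ^ k * (P ^ 3) ^ (T * P - k)) := by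
        intro I hI
        refine (Finset.card_biUnion_le_card_mul _ _ ((k ^ 3) ^ k * (P ^ 3) ^ (T * P - k)) ?_).trans ?_
        · intro J hJ
          rw [Finset.mem_powersetCard] at hI hJ
          rw [hG, hI.2, hJ.2]
        · simp [Finset.card_powersetCard]
      refine (Finset.card_biUnion_le_card_mul _ _ _ this).trans ?_
      rw [Finset.card_powersetCard]
      simp only [Finset.card_univ, Fintype.card_prod, Fintype.card_fin]
      rw [mul_comm P T]
      exact le_of_eq (by ring)
    have h2 := aux_term T P k (le_trans (by gcongr; exact hk.2) h) (by nlinarith)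
    have h3 : 3 ^ k * ((Finset.powersetCard k Finset.univ).biUnion fun I =>
        (Finset.powersetCard k Finset.univ).biUnion fun J => G I J).card ≤ (P ^ 3) ^ (T * P) :=
      le_trans (by gcongr) h2
    have h4 : (3 : ℝ) ^ k * (((Finset.powersetCard k Finset.univ).biUnion fun I =>
        (Finset.powersetCard k Finset.univ).biUnion fun J => G I J).card : ℕ)
          ≤ (((P ^ 3) ^ (T * P) : ℕ) : ℝ) := by exact_mod_cast h3
    rw [one_div, inv_pow, ← div_eq_inv_mul, le_div_iff₀ (by positivity)]
    linarith
  have hR : (((P ^ 3) ^ (T * P) : ℕ) : ℝ) ≤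
      (∑ k ∈ Finset.Icc 1 K, ((1 : ℝ) / 3) ^ k) * (((P ^ 3) ^ (T * P) : ℕ) : ℝ) := by
    rw [Finset.sum_mul]
    refine le_trans ?_ (Finset.sum_le_sum hb)
    rw [← Nat.cast_sum]
    exact_mod_cast hcard.trans Finset.card_biUnion_le
  have hpos : (0 : ℝ) < (((P ^ 3) ^ (T * P) : ℕ) : ℝ) := by positivity
  nlinarith [aux_geom K]

/-- uniformly exhaustive submeasures with a Fatou property -/
structure UESub {Ω : Type*} [MeasurableSpace Ω] (ψ : Set Ω → ℝ≥0∞) : Prop where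
  mono : ∀ A B, MeasurableSet A → MeasurableSet B → A ⊆ B → ψ A ≤ ψ B
  sub : ∀ A B, MeasurableSet A → MeasurableSet B → ψ (A ∪ B) ≤ ψ A + ψ B
  emp : ψ ∅ = 0
  univ_pos : 0 < ψ univ
  exh : ∀ ε : ℝ≥0∞, 0 < ε → ∃ N : ℕ, ∀ (J : Type) [Fintype J] (B : J → Set Ω),
    (∀ j, MeasurableSet (B j)) → (∀ i j, i ≠ j → Disjoint (B i) (B j)) →
    (∀ j, ε ≤ ψ (B j)) → Fintype.card J ≤ N
  cont : ∀ B : ℕ → Set Ω, (∀ n, MeasurableSet (B n)) → Monotone B → ∀ c,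
    (∀ n, ψ (B n) ≤ c) → ψ (⋃ n, B n) ≤ c

open Classical in
lemma UESub.mult {Ω : Type*} [MeasurableSpace Ω] {ψ : Set Ω → ℝ≥0∞} (hψ : UESub ψ)
    (ε : ℝ≥0∞) (hε : 0 < ε) (hε' : ε ≠ ⊤) :
    ∃ D : ℕ, 0 < D ∧ ∀ (P : ℕ) (A : Fin P → Set Ω), 0 < P → (∀ i, MeasurableSet (A i)) →
      (∀ i, ε ≤ ψ (A i)) →
      ∃ x, P < D * (Finset.univ.filter (fun i => x ∈ A i)).card := by
  obtain ⟨N, hN⟩ := hψ.exh (ε / 3) (ENNReal.div_pos hε.ne' (by simp))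
  set T := N + 1 with hT
  refine ⟨27 * T * T, by positivity, ?_⟩
  intro P A hP hA hAε
  by_contra hcon
  push Not at hcon
  -- multiplicity bound
  let K := P / (27 * T)
  obtain ⟨g, hg⟩ := exists_graph T P K (by omega) hP (Nat.mul_div_le _ _)
  let Ix : Ω → Finset (Fin P × Fin T) := fun x => Finset.univ.filter (fun j => x ∈ A j.1)
  have hIx : ∀ x, (Ix x).card ≤ K := by
    intro x
    have : Ix x = (Finset.univ.filter (fun i => x ∈ A i)) ×ˢ (Finset.univ : Finset (Fin T)) := by
      ext j; simp [Ix]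
    rw [this, Finset.card_product, Nat.le_div_iff_mul_le (by positivity)]
    have := hcon x
    simp only [Finset.card_univ, Fintype.card_fin]
    linarith
  have hF : ∀ I : Finset (Fin P × Fin T), ∃ F : (Fin P × Fin T) → Fin 3, I.card ≤ K →
      ∀ i ∈ I, ∀ j ∈ I, g i (F i) = g j (F j) → i = j := by
    intro I
    by_cases hI : I.card ≤ K
    swap
    · exact ⟨fun _ => 0, fun h => absurd h hI⟩
    have hall := (Finset.all_card_le_biUnion_card_iff_exists_injective
      (fun i : I => Finset.univ.image (g i))).1 (by
        intro s
        have := hg (s.map (Function.Embedding.subtype _)) (by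
          refine le_trans (Finset.card_le_card ?_) hI
          intro i; simp; tauto)
        rw [Finset.card_map] at this
        refine this.trans (Finset.card_le_card ?_)
        intro v; simp)
    obtain ⟨f, hf, hf2⟩ := hall
    have : ∀ i : Fin P × Fin T, ∃ a : Fin 3, ∀ h : i ∈ I, g i a = f ⟨i, h⟩ := by
      intro i
      by_cases h : i ∈ I
      · have := hf2 ⟨i, h⟩
        simp only [Finset.mem_image, Finset.mem_univ, true_and] at this
        obtain ⟨a, ha⟩ := this
        exact ⟨a, fun _ => ha⟩
      · exact ⟨0, fun h' => absurd h' h⟩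
    choose F hF using this
    refine ⟨F, fun _ i hi j hj hij => ?_⟩
    rw [hF i hi, hF j hj] at hij
    exact congrArg Subtype.val (hf hij)
  choose F hF using hF
  let B : (Fin P × Fin T) → Fin 3 → Set Ω := fun j a => {x | x ∈ A j.1 ∧ F (Ix x) j = a}
  have hIm : ∀ I, MeasurableSet {x | Ix x = I} := by
    intro I
    have : {x | Ix x = I} = ⋂ j, (if j ∈ I then A j.1 else (A j.1)ᶜ) := by
      ext x
      simp only [Set.mem_ofPred_eq, Set.mem_iInter, Finset.ext_iff, Ix, Finset.mem_filter,
        Finset.mem_univ, true_and]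
      refine forall_congr' fun j => ?_
      split_ifs with h <;> simp [h]
    rw [this]
    refine MeasurableSet.iInter fun j => ?_
    split_ifs
    · exact hA _
    · exact (hA _).compl
  have hBm : ∀ j a, MeasurableSet (B j a) := by
    intro j a
    have : B j a = A j.1 ∩ ⋃ I ∈ {I | F I j = a}, {x | Ix x = I} := by
      ext x; simp [B]
    rw [this]
    exact (hA _).inter (MeasurableSet.biUnion (Set.to_countable _) fun I _ => hIm I)
  have hbig : ∀ j, ∃ a, ε / 3 ≤ ψ (B j a) := by
    intro j
    by_contra hc
    push Not at hc
    have hun : A j.1 ⊆ (B j 0 ∪ B j 1) ∪ B j 2 := by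
      intro x hx
      have : ∀ a : Fin 3, a = 0 ∨ a = 1 ∨ a = 2 := by decide
      rcases this (F (Ix x) j) with h | h | h
      · exact Or.inl (Or.inl ⟨hx, h⟩)
      · exact Or.inl (Or.inr ⟨hx, h⟩)
      · exact Or.inr ⟨hx, h⟩
    have h1 := hψ.mono _ _ (hA j.1) (((hBm j 0).union (hBm j 1)).union (hBm j 2)) hun
    have h2 := hψ.sub _ _ ((hBm j 0).union (hBm j 1)) (hBm j 2)
    have h3 := hψ.sub _ _ (hBm j 0) (hBm j 1)
    have h4 : ε < ε / 3 + ε / 3 + ε / 3 := by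
      calc ε ≤ ψ (A j.1) := hAε _
        _ ≤ _ := h1
        _ ≤ ψ (B j 0) + ψ (B j 1) + ψ (B j 2) := h2.trans (by gcongr)
        _ < _ := ENNReal.add_lt_add (ENNReal.add_lt_add (hc 0) (hc 1)) (hc 2)
    rw [ENNReal.add_thirds] at h4
    exact lt_irrefl _ h4
  choose a ha using hbig
  obtain ⟨v, -, hv⟩ := Finset.exists_lt_card_fiber_of_mul_lt_card_of_maps_to
    (s := (Finset.univ : Finset (Fin P × Fin T))) (t := (Finset.univ : Finset (Fin P)))
    (f := fun j => g j (a j)) (n := N) (fun _ _ => Finset.mem_univ _)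
    (by simp only [Finset.card_univ, Fintype.card_fin, Fintype.card_prod, hT]; nlinarith)
  have := hN {j : Fin P × Fin T // g j (a j) = v} (fun j => B j.1 (a j.1))
    (fun j => hBm _ _) (by
      rintro ⟨i, hi⟩ ⟨j, hj⟩ hij
      rw [Set.disjoint_left]
      rintro x ⟨hx1, hx2⟩ ⟨hy1, hy2⟩
      apply hij
      have := hF (Ix x) (hIx x) i (by simp [Ix, hx1]) j (by simp [Ix, hy1])
        (by rw [hx2, hy2, hi, hj])
      exact Subtype.ext this) (fun j => ha _)
  rw [Fintype.card_subtype] at this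
  omega

open Classical in
lemma UESub.weight {Ω : Type*} [MeasurableSpace Ω] {ψ : Set Ω → ℝ≥0∞} (hψ : UESub ψ)
    (ε : ℝ≥0∞) (hε : 0 < ε) (hε' : ε ≠ ⊤) :
    ∃ δ : ℝ, 0 < δ ∧ ∀ (ι : Type) [Fintype ι] (A : ι → Set Ω) (w : ι → ℝ),
      (∀ i, MeasurableSet (A i)) → (∀ i, ε ≤ ψ (A i)) → (∀ i, 0 ≤ w i) → 0 < ∑ i, w i →
      ∃ x, δ * ∑ i, w i ≤ ∑ i, w i * (A i).indicator (fun _ => (1 : ℝ)) x := by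
  obtain ⟨D, hD, hmul⟩ := hψ.mult ε hε hε'
  refine ⟨1 / (2 * D), by positivity, ?_⟩
  intro ι _ A w hA hAε hw hW
  by_contra hcon
  push Not at hcon
  set W := ∑ i, w i with hWd
  obtain ⟨L, hL⟩ := exists_nat_gt (2 * D * Fintype.card ι / W)
  rw [div_lt_iff₀ hW] at hL
  let n : ι → ℕ := fun i => ⌈w i * L⌉₊
  let S := (Σ i, Fin (n i))
  have hcardS : Fintype.card S = ∑ i, n i := by simp [S]
  have hn1 : ∀ i, w i * L ≤ n i := fun i => Nat.le_ceil _
  have hn2 : ∀ i, (n i : ℝ) ≤ w i * L + 1 := fun i =>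
    (Nat.ceil_lt_add_one (mul_nonneg (hw i) (by positivity))).le
  have hsum : W * L ≤ ∑ i, (n i : ℝ) := by
    rw [hWd, Finset.sum_mul]; exact Finset.sum_le_sum fun i _ => hn1 i
  have hcι : (0:ℝ) ≤ Fintype.card ι := by positivity
  have hLW : 0 < W * L := by
    have : (0:ℝ) ≤ 2 * D * Fintype.card ι := by positivity
    linarith
  have hpos : 0 < Fintype.card S := by
    rw [hcardS]
    have : (0 : ℝ) < ((∑ i, n i : ℕ) : ℝ) := by push_cast; linarith
    exact_mod_cast this
  let e := Fintype.equivFin S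
  obtain ⟨x, hx⟩ := hmul (Fintype.card S) (fun k => A (e.symm k).1) hpos (fun _ => hA _)
    (fun _ => hAε _)
  have hcnt : ((Finset.univ.filter (fun k => x ∈ A (e.symm k).1)).card : ℝ)
      = ∑ i, (n i : ℝ) * (A i).indicator (fun _ => (1 : ℝ)) x := by
    rw [Finset.card_filter]
    push_cast
    rw [Equiv.sum_comp e.symm (fun s : S => if x ∈ A s.1 then (1 : ℝ) else 0)]
    simp only [S]
    rw [Fintype.sum_sigma]
    refine Finset.sum_congr rfl fun i _ => ?_
    simp only [Set.indicator_apply]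
    split_ifs <;> simp
  have hx' : (Fintype.card S : ℝ) < D * ∑ i, (n i : ℝ) * (A i).indicator (fun _ => (1 : ℝ)) x := by
    rw [← hcnt]; exact_mod_cast hx
  have hb : ∑ i, (n i : ℝ) * (A i).indicator (fun _ => (1 : ℝ)) x
      ≤ L * (∑ i, w i * (A i).indicator (fun _ => (1 : ℝ)) x) + Fintype.card ι := by
    have : (Fintype.card ι : ℝ) = ∑ i : ι, (1 : ℝ) := by simp
    rw [this, Finset.mul_sum, ← Finset.sum_add_distrib]
    refine Finset.sum_le_sum fun i _ => ?_
    by_cases h : x ∈ A i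
    · simp only [Set.indicator_of_mem h]; linarith [hn2 i]
    · simp [Set.indicator_of_notMem h]
  have hc := hcon x
  rw [hcardS] at hx'
  push_cast at hx'
  have hD' : (0 : ℝ) < D := by exact_mod_cast hD
  set s := ∑ i, w i * (A i).indicator (fun _ => (1 : ℝ)) x with hs
  have hc' : 2 * D * s < W := by
    have := mul_lt_mul_of_pos_left hc (by positivity : (0:ℝ) < 2 * D)
    field_simp at this
    linarith
  have hLpos : (0 : ℝ) < L := by
    by_contra h0
    nlinarith
  have h5 : D * (L * s) ≤ L * W / 2 := by nlinarith
  nlinarith [mul_le_mul_of_nonneg_left hb hD'.le]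

/-- bounded functions -/
def BddFun (Ω : Type*) : Submodule ℝ (Ω → ℝ) where
  carrier := {f | ∃ C, ∀ x, |f x| ≤ C}
  add_mem' := by
    rintro f g ⟨C, hC⟩ ⟨D, hD⟩
    exact ⟨C + D, fun x => (abs_add_le _ _).trans (add_le_add (hC x) (hD x))⟩
  zero_mem' := ⟨0, by simp⟩
  smul_mem' := by
    rintro c f ⟨C, hC⟩
    exact ⟨|c| * C, fun x => by
      simp only [Pi.smul_apply, smul_eq_mul, abs_mul]
      exact mul_le_mul_of_nonneg_left (hC x) (abs_nonneg c)⟩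

/-- indicator functions as bounded functions -/
noncomputable def bndInd {Ω : Type*} (A : Set Ω) : BddFun Ω :=
  ⟨A.indicator (fun _ => (1 : ℝ)), 1, fun x => by
    by_cases h : x ∈ A <;> simp [h]⟩

lemma UESub.functional {Ω : Type*} [MeasurableSpace Ω] {ψ : Set Ω → ℝ≥0∞} (hψ : UESub ψ)
    (ε : ℝ≥0∞) (hε : 0 < ε) (hε' : ε ≠ ⊤) :
    ∃ δ : ℝ, 0 < δ ∧ ∃ ν : BddFun Ω →ₗ[ℝ] ℝ, (∀ f : BddFun Ω, (∀ x, 0 ≤ f.1 x) → 0 ≤ ν f) ∧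
      (∀ A, MeasurableSet A → ε ≤ ψ A → δ ≤ ν (bndInd A)) ∧
      (∀ A, MeasurableSet A → ψ A = 0 → ν (bndInd A) ≤ 0) := by
  obtain ⟨δ, hδ, hw⟩ := hψ.weight ε hε hε'
  let s : ConvexCone ℝ (BddFun Ω) :=
    { carrier := {f | ∃ Z, MeasurableSet Z ∧ ψ Z = 0 ∧ ∃ (ι : Type) (_ : Fintype ι)
        (A : ι → Set Ω) (w : ι → ℝ), (∀ i, MeasurableSet (A i)) ∧ (∀ i, ε ≤ ψ (A i)) ∧
        (∀ i, 0 ≤ w i) ∧ ∀ x, x ∉ Z →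
          ∑ i, w i * (A i).indicator (fun _ => (1 : ℝ)) x - δ * ∑ i, w i ≤ f.1 x}
      smul_mem' := by
        rintro c hc f ⟨Z, hZ, hZ0, ι, _, A, w, hA, hAε, hw0, h⟩
        refine ⟨Z, hZ, hZ0, ι, inferInstance, A, fun i => c * w i, hA, hAε,
          fun i => mul_nonneg hc.le (hw0 i), fun x hx => ?_⟩
        have := mul_le_mul_of_nonneg_left (h x hx) hc.le
        simp only [mul_assoc, ← Finset.mul_sum]
        simp only [Submodule.coe_smul, Pi.smul_apply, smul_eq_mul]
        linarith
      add_mem' := by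
        rintro f ⟨Z, hZ, hZ0, ι, _, A, w, hA, hAε, hw0, h⟩
          g ⟨Z', hZ', hZ0', ι', _, A', w', hA', hAε', hw0', h'⟩
        refine ⟨Z ∪ Z', hZ.union hZ', ?_, ι ⊕ ι', inferInstance, Sum.elim A A', Sum.elim w w',
          ?_, ?_, ?_, ?_⟩
        · have := hψ.sub Z Z' hZ hZ'
          rw [hZ0, hZ0'] at this
          simpa using this
        · rintro (i | i)
          · exact hA i
          · exact hA' i
        · rintro (i | i)
          · exact hAε i
          · exact hAε' i
        · rintro (i | i)
          · exact hw0 i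
          · exact hw0' i
        · intro x hx
          have h1 := h x (fun hz => hx (Or.inl hz))
          have h2 := h' x (fun hz => hx (Or.inr hz))
          simp only [Fintype.sum_sum_type, Sum.elim_inl, Sum.elim_inr, Submodule.coe_add,
            Pi.add_apply]
          linarith }
  have hmem : ∀ f : BddFun Ω, f ∈ s ↔ ∃ Z, MeasurableSet Z ∧ ψ Z = 0 ∧ ∃ (ι : Type) (_ : Fintype ι)
        (A : ι → Set Ω) (w : ι → ℝ), (∀ i, MeasurableSet (A i)) ∧ (∀ i, ε ≤ ψ (A i)) ∧
        (∀ i, 0 ≤ w i) ∧ ∀ x, x ∉ Z →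
          ∑ i, w i * (A i).indicator (fun _ => (1 : ℝ)) x - δ * ∑ i, w i ≤ f.1 x := fun f => Iff.rfl
  have hnull : ∀ f : BddFun Ω, ∀ Z, MeasurableSet Z → ψ Z = 0 → (∀ x, x ∉ Z → 0 ≤ f.1 x) →
      f ∈ s := by
    intro f Z hZ hZ0 h
    rw [hmem]
    exact ⟨Z, hZ, hZ0, Empty, inferInstance, fun e => e.elim, fun e => e.elim, fun e => e.elim,
      fun e => e.elim, fun e => e.elim, by simpa using h⟩
  have hout : ∀ Z, MeasurableSet Z → ψ Z = 0 → ∃ x, x ∉ Z := by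
    intro Z hZ hZ0
    by_contra hc
    push Not at hc
    have : Z = univ := Set.eq_univ_of_forall hc
    rw [this] at hZ0
    exact hψ.univ_pos.ne' hZ0
  have hconst : ∀ c : ℝ, ∀ f : BddFun Ω, (∀ x, f.1 x = c) → f ∈ s → 0 ≤ c := by
    intro c f hf hfs
    rw [hmem] at hfs
    obtain ⟨Z, hZ, hZ0, ι, _, A, w, hA, hAε, hw0, h⟩ := hfs
    simp only [hf] at h
    rcases (Finset.sum_nonneg fun i _ => hw0 i : 0 ≤ ∑ i, w i).eq_or_lt with h0 | h0
    · obtain ⟨x, hx⟩ := hout Z hZ hZ0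
      refine le_trans ?_ (h x hx)
      rw [← h0, mul_zero, sub_zero]
      exact Finset.sum_nonneg fun i _ => mul_nonneg (hw0 i)
        (Set.indicator_nonneg (fun _ _ => zero_le_one) _)
    · obtain ⟨x, hx⟩ := hw ι (fun i => A i \ Z) w (fun i => (hA i).diff hZ) (fun i => by
        refine (hAε i).trans ?_
        have h1 := hψ.sub (A i \ Z) Z ((hA i).diff hZ) hZ
        rw [hZ0, add_zero] at h1
        refine le_trans (hψ.mono _ _ (hA i) (((hA i).diff hZ).union hZ) ?_) h1
        intro y hy
        by_cases hyz : y ∈ Z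
        · exact Or.inr hyz
        · exact Or.inl ⟨hy, hyz⟩) hw0 h0
      by_cases hxz : x ∈ Z
      · exfalso
        simp [hxz] at hx
        nlinarith
      · have h1 := h x hxz
        have h2 : ∀ i, (A i \ Z).indicator (fun _ => (1 : ℝ)) x
            = (A i).indicator (fun _ => (1 : ℝ)) x := by
          intro i
          by_cases hxa : x ∈ A i <;> simp [hxa, hxz]
        have hx2 : δ * ∑ i, w i ≤ ∑ i, w i * (A i).indicator (fun _ => (1 : ℝ)) x :=
          hx.trans (le_of_eq (Finset.sum_congr rfl fun i _ => congrArg (w i * ·) (h2 i)))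
        linarith
  have h1ne : bndInd (univ : Set Ω) ≠ 0 := by
    intro h
    obtain ⟨x, _⟩ := hout ∅ MeasurableSet.empty hψ.emp
    have := congrFun (congrArg Subtype.val h) x
    simp [bndInd] at this
  obtain ⟨ν, hν1, hν2⟩ := riesz_extension (s.toPointedCone (hnull 0 ∅ MeasurableSet.empty hψ.emp fun x _ => le_refl _))
    (LinearPMap.mkSpanSingleton (bndInd univ) (1 : ℝ) h1ne)
    (by
      rintro ⟨x, hx⟩ hxs
      obtain ⟨c, rfl⟩ := Submodule.mem_span_singleton.1 hx
      rw [LinearPMap.mkSpanSingleton'_apply]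
      have := hconst c _ (by intro y; simp [bndInd]) hxs
      simpa using this)
    (by
      intro y
      obtain ⟨C, hC⟩ := y.2
      refine ⟨⟨C • bndInd univ, Submodule.mem_span_singleton.2 ⟨C, rfl⟩⟩, ?_⟩
      refine hnull _ ∅ MeasurableSet.empty hψ.emp fun x _ => ?_
      have := (abs_le.1 (hC x)).1
      simp [bndInd]
      linarith)
  have hν1' : ν (bndInd univ) = 1 := by
    have := hν1 ⟨bndInd univ, Submodule.mem_span_singleton_self _⟩
    rw [this, LinearPMap.mkSpanSingleton_apply]
  refine ⟨δ, hδ, ν, ?_, ?_, ?_⟩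
  · intro f hf
    exact hν2 f (hnull f ∅ MeasurableSet.empty hψ.emp fun x _ => hf x)
  · intro A hA hAε
    have : bndInd A - δ • bndInd univ ∈ s := by
      rw [hmem]
      refine ⟨∅, MeasurableSet.empty, hψ.emp, Unit, inferInstance, fun _ => A, fun _ => 1,
        fun _ => hA, fun _ => hAε, fun _ => zero_le_one, fun x _ => ?_⟩
      simp [bndInd]
    have := hν2 _ this
    rw [map_sub, map_smul, hν1'] at this
    simp at this
    linarith
  · intro A hA hA0
    have : - bndInd A ∈ s := hnull _ A hA hA0 fun x hx => by simp [bndInd, hx]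
    have := hν2 _ this
    rw [map_neg] at this
    linarith

open Classical in
lemma UESub.measure_eps {Ω : Type*} [MeasurableSpace Ω] {ψ : Set Ω → ℝ≥0∞} (hψ : UESub ψ)
    (ε : ℝ≥0∞) (hε : 0 < ε) (hε' : ε ≠ ⊤) :
    ∃ μ : Measure Ω, IsFiniteMeasure μ ∧ (∀ A, MeasurableSet A → ψ A = 0 → μ A = 0) ∧
      (∀ A, MeasurableSet A → μ A = 0 → ψ A ≤ ε) := by
  obtain ⟨δ, hδ, ν, hpos, hbig, hnull⟩ := hψ.functional ε hε hε'
  let v : Set Ω → ℝ := fun A => ν (bndInd A)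
  have hv0 : ∀ A, 0 ≤ v A := fun A => hpos _ fun x => Set.indicator_nonneg (fun _ _ => zero_le_one) _
  have hvadd : ∀ A B, v (A ∩ B) + v (A \ B) = v A := by
    intro A B
    simp only [v]
    rw [← map_add]
    congr 1
    ext x
    by_cases h1 : x ∈ A <;> by_cases h2 : x ∈ B <;> simp [bndInd, h1, h2]
  have hvmono : ∀ A B, A ⊆ B → v A ≤ v B := by
    intro A B h
    have := hvadd B A
    rw [Set.inter_eq_self_of_subset_right h] at this
    linarith [hv0 (B \ A)]
  have hvun : ∀ A B, v (A ∪ B) ≤ v A + v B := by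
    intro A B
    have := hvadd (A ∪ B) A
    have h1 := hvmono ((A ∪ B) ∩ A) A Set.inter_subset_right
    have h2 := hvmono ((A ∪ B) \ A) B (by intro x; simp; tauto)
    linarith
  have hvempty : v ∅ = 0 := by
    have := hvadd ∅ ∅
    simp at this
    exact this
  let m : Set Ω → ℝ≥0∞ := fun A => if MeasurableSet A then ENNReal.ofReal (v A) else ⊤
  have hm0 : m ∅ = 0 := by simp [m, hvempty]
  let o := OuterMeasure.ofFunction m hm0
  have hcar : (inferInstance : MeasurableSpace Ω) ≤ o.caratheodory := by
    intro A hA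
    refine OuterMeasure.ofFunction_caratheodory fun t => ?_
    by_cases ht : MeasurableSet t
    · simp only [m, ht, if_true, ht.inter hA, ht.diff hA]
      rw [← ENNReal.ofReal_add (hv0 _) (hv0 _), hvadd]
    · simp [m, ht]
  have hle : ∀ A, MeasurableSet A → o.toMeasure hcar A ≤ ENNReal.ofReal (v A) := by
    intro A hA
    rw [toMeasure_apply _ _ hA]
    refine (OuterMeasure.ofFunction_le A).trans ?_
    simp [m, hA]
  refine ⟨o.toMeasure hcar, ⟨?_⟩, ?_, ?_⟩
  · exact (hle _ MeasurableSet.univ).trans_lt ENNReal.ofReal_lt_top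
  · intro A hA h0
    have := hle A hA
    rw [ENNReal.ofReal_of_nonpos (hnull A hA h0)] at this
    simpa using this
  · intro A hA h0
    rw [toMeasure_apply _ _ hA] at h0
    have hlt : o A < ENNReal.ofReal δ := by rw [h0]; simpa using hδ
    rw [OuterMeasure.ofFunction_apply] at hlt
    simp only [iInf_lt_iff] at hlt
    obtain ⟨t, hAt, ht⟩ := hlt
    have htm : ∀ n, MeasurableSet (t n) := by
      intro n
      by_contra hc
      have h1 : m (t n) ≤ ∑' n, m (t n) := ENNReal.le_tsum n
      have h2 : m (t n) = ⊤ := by simp [m, hc]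
      rw [h2] at h1
      exact absurd (h1.trans_lt ht) (by simp)
    have hmt : ∀ n, m (t n) = ENNReal.ofReal (v (t n)) := fun n => by simp [m, htm n]
    let B : ℕ → Set Ω := fun n => A ∩ ⋃ i ∈ Finset.range n, t i
    have hBm : ∀ n, MeasurableSet (B n) := fun n =>
      hA.inter (Finset.measurableSet_biUnion _ fun i _ => htm i)
    have hvB : ∀ n, v (⋃ i ∈ Finset.range n, t i) ≤ ∑ i ∈ Finset.range n, v (t i) := by
      intro n
      induction n with
      | zero => simp [hvempty]
      | succ n ih =>
        rw [Finset.sum_range_succ, Finset.range_add_one, Finset.set_biUnion_insert, Set.union_comm]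
        exact (hvun _ _).trans (by linarith)
    have hsmall : ∀ n, ψ (B n) ≤ ε := by
      intro n
      by_contra hc
      push Not at hc
      have h1 := hbig (B n) (hBm n) hc.le
      have h2 : δ ≤ ∑ i ∈ Finset.range n, v (t i) :=
        h1.trans ((hvmono _ _ Set.inter_subset_right).trans (hvB n))
      have h3 := ENNReal.ofReal_le_ofReal h2
      rw [ENNReal.ofReal_sum_of_nonneg fun i _ => hv0 _] at h3
      simp only [← hmt] at h3
      exact absurd ht (not_lt.2 (h3.trans (ENNReal.sum_le_tsum _)))
    have hAB : A = ⋃ n, B n := by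
      ext x
      simp only [B, Set.mem_iUnion, Set.mem_inter_iff, Finset.mem_range]
      constructor
      · intro hx
        obtain ⟨i, hi⟩ := Set.mem_iUnion.1 (hAt hx)
        exact ⟨i + 1, hx, i, by omega, hi⟩
      · rintro ⟨n, hx, -⟩
        exact hx
    rw [hAB]
    refine hψ.cont B hBm ?_ ε hsmall
    intro a b hab x
    simp only [B, Set.mem_iUnion, Set.mem_inter_iff, Finset.mem_range]
    rintro ⟨hx, i, hi, hxi⟩
    exact ⟨hx, i, by omega, hxi⟩

lemma UESub.control {Ω : Type*} [MeasurableSpace Ω] {ψ : Set Ω → ℝ≥0∞} (hψ : UESub ψ) :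
    ∃ μ : Measure Ω, IsFiniteMeasure μ ∧ ∀ A, MeasurableSet A → (ψ A = 0 ↔ μ A = 0) := by
  have h : ∀ n : ℕ, ∃ μ : Measure Ω, IsFiniteMeasure μ ∧
      (∀ A, MeasurableSet A → ψ A = 0 → μ A = 0) ∧
      (∀ A, MeasurableSet A → μ A = 0 → ψ A ≤ ((n : ℝ≥0∞) + 1)⁻¹) := fun n =>
    hψ.measure_eps _ (by simp) (by simp)
  choose μ hfin h1 h2 using h
  let M := Measure.sum μ
  have hsf : SFinite M := inferInstance
  obtain ⟨ρ, hρ, hρ1, hρ2⟩ := exists_isFiniteMeasure_absolutelyContinuous M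
  refine ⟨ρ, hρ, fun A hA => ⟨fun h0 => ?_, fun h0 => ?_⟩⟩
  · apply hρ2
    rw [Measure.sum_apply _ hA]
    simp [fun n => h1 n A hA h0]
  · have h3 : M A = 0 := hρ1 h0
    rw [Measure.sum_apply _ hA, ENNReal.tsum_eq_zero] at h3
    by_contra hc
    obtain ⟨n, hn⟩ := ENNReal.exists_inv_nat_lt hc
    have h4 := h2 n A hA (h3 n)
    have h5 : ((n : ℝ≥0∞) + 1)⁻¹ ≤ (n : ℝ≥0∞)⁻¹ := ENNReal.inv_le_inv.2 (by simp)
    exact absurd hn (not_lt.2 (h4.trans h5))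

lemma AdmissibleQuasinorm.null_of_supp {Ω : Type*} [TopologicalSpace Ω] [MeasurableSpace Ω]
    (X : AdmissibleQuasinorm Ω) (f g : Ω → ℝ) (hf : Measurable f) (hg : Measurable g)
    (hfg : ∀ x, f x = 0 → g x = 0) (h0 : X.N f = 0) : X.N g = 0 := by
  have habs : X.N g ≤ X.N (fun x => |g x|) :=
    X.mono _ _ hg hg.abs (fun x => by simp)
  have hlim := X.cont (fun n x => min ((n : ℝ) * |f x|) |g x|) (fun x => |g x|)
    (fun n => (hf.abs.const_mul _).min hg.abs) hg.abs
    (fun n x => by positivity)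
    (fun n x => by
      apply min_le_min_right
      push_cast
      nlinarith [abs_nonneg (f x)])
    (fun x => by
      by_cases hx : f x = 0
      · simp [hx, hfg x hx]
      · apply tendsto_const_nhds.congr'
        obtain ⟨m, hm⟩ := exists_nat_gt (|g x| / |f x|)
        have hpos : 0 < |f x| := abs_pos.2 hx
        rw [div_lt_iff₀ hpos] at hm
        filter_upwards [eventually_ge_atTop m] with n hn
        have : (m : ℝ) ≤ n := by exact_mod_cast hn
        rw [min_eq_right]
        nlinarith)
  have hz : ∀ n : ℕ, X.N (fun x => min ((n : ℝ) * |f x|) |g x|) = 0 := by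
    intro n
    have h1 : X.N (fun x => min ((n : ℝ) * |f x|) |g x|) ≤ X.N (fun x => (n : ℝ) * f x) :=
      X.mono _ _ ((hf.abs.const_mul _).min hg.abs) (hf.const_mul _) (fun x => by
        rw [abs_of_nonneg (by positivity), abs_mul, Nat.abs_cast]
        exact min_le_left _ _)
    rw [X.smul _ _ hf, h0, mul_zero] at h1
    simpa using h1
  simp only [hz] at hlim
  have := tendsto_nhds_unique hlim tendsto_const_nhds
  rw [this] at habs
  simpa using habs

lemma AdmissibleQuasinorm.ueSub {Ω : Type*} [TopologicalSpace Ω] [MeasurableSpace Ω]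
    (p q b : ℝ) (hp : 0 < p) (hq : 0 < q)
    (X : AdmissibleQuasinorm Ω)
    (hXp : ∀ f g : Ω → ℝ, Measurable f → Measurable g →
      X.N (fun x => f x + g x) ^ p ≤ X.N f ^ p + X.N g ^ p)
    (hXb : CrudeLower X q b) (u : Ω → ℝ) (hu : Measurable u) (hu0 : ∀ x, 0 < u x)
    (hN0 : 0 < X.N u) (hN : X.N u < ⊤) :
    UESub (fun A => X.N (A.indicator u) ^ p) where
  mono := by
    intro A B hA hB hAB
    refine ENNReal.rpow_le_rpow (X.mono _ _ (hu.indicator hA) (hu.indicator hB) fun x => ?_) hp.le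
    by_cases h : x ∈ A
    · simp [h, hAB h]
    · simp [h]
  sub := by
    intro A B hA hB
    refine le_trans (ENNReal.rpow_le_rpow (X.mono _ _ (hu.indicator (hA.union hB))
      ((hu.indicator hA).add (hu.indicator hB)) fun x => ?_) hp.le)
      (hXp _ _ (hu.indicator hA) (hu.indicator hB))
    have := hu0 x
    by_cases h : x ∈ A <;> by_cases h' : x ∈ B <;> simp [h, h', abs_of_pos this]
    rw [abs_of_pos (by linarith)]
    linarith
  emp := by
    have := X.smul 0 u hu
    simp only [zero_mul, abs_zero, ENNReal.ofReal_zero] at this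
    have h2 : (∅ : Set Ω).indicator u = fun _ => 0 := by simp
    beta_reduce
    rw [h2, this, ENNReal.zero_rpow_of_pos hp]
  univ_pos := by
    simp only [Set.indicator_univ]
    exact ENNReal.rpow_pos hN0 hN.ne
  exh := by
    intro ε hε
    -- the total bound
    set R : ℝ≥0∞ := (ENNReal.ofReal b * X.N u) ^ q with hR
    have hRtop : R ≠ ⊤ := ENNReal.rpow_ne_top_of_nonneg hq.le
      (ENNReal.mul_ne_top ENNReal.ofReal_ne_top hN.ne)
    obtain ⟨η, hη, hη', hηε⟩ : ∃ η : ℝ≥0∞, 0 < η ∧ η ≠ ⊤ ∧ η ≤ ε :=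
      ⟨min ε 1, lt_min hε one_pos, ne_top_of_le_ne_top one_ne_top (min_le_right _ _), min_le_left _ _⟩
    set κ : ℝ≥0∞ := (η ^ (1 / p)) ^ q with hκ
    have hκ0 : κ ≠ 0 := (ENNReal.rpow_pos (ENNReal.rpow_pos hη hη')
      (ENNReal.rpow_ne_top_of_nonneg (by positivity) hη')).ne'
    obtain ⟨N, hNN⟩ := ENNReal.exists_nat_gt (ENNReal.div_ne_top hRtop hκ0)
    refine ⟨N, ?_⟩
    intro J _ B hB hdis hbig
    let e := Fintype.equivFin J
    have h1 := hXb (Fintype.card J) (fun k => (B (e.symm k)).indicator u)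
      (fun k => hu.indicator (hB _)) (by
        intro i j hij x
        by_cases hx : x ∈ B (e.symm i)
        · right
          have := Set.disjoint_left.1 (hdis _ _ (fun h => hij (e.symm.injective h))) hx
          simp [this]
        · left; simp [hx])
    have h2 : X.N (fun x => ∑ k, (B (e.symm k)).indicator u x) ≤ X.N u := by
      refine X.mono _ _ (Finset.measurable_sum _ fun k _ => hu.indicator (hB _)) hu fun x => ?_
      have hnn : 0 ≤ ∑ k, (B (e.symm k)).indicator u x :=
        Finset.sum_nonneg fun k _ => Set.indicator_nonneg (fun y _ => (hu0 y).le) _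
      rw [abs_of_nonneg hnn, abs_of_pos (hu0 x)]
      by_cases hx : ∃ k, x ∈ B (e.symm k)
      · obtain ⟨k, hk⟩ := hx
        rw [Finset.sum_eq_single k]
        · simp [hk]
        · intro j _ hjk
          have := Set.disjoint_left.1 (hdis _ _ (fun h => hjk (e.symm.injective h).symm)) hk
          simp [this]
        · simp
      · push Not at hx
        rw [Finset.sum_eq_zero]
        · exact (hu0 x).le
        · intro k _; simp [hx k]
    have h3 : ∑ k : Fin (Fintype.card J), X.N ((B (e.symm k)).indicator u) ^ q ≤ R := by
      have h4 := ENNReal.rpow_le_rpow (h1.trans (mul_le_mul_right h2 _)) hq.le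
      rwa [← ENNReal.rpow_mul, one_div_mul_cancel hq.ne', ENNReal.rpow_one] at h4
    have h5 : (Fintype.card J : ℝ≥0∞) * κ ≤ R := by
      refine le_trans ?_ h3
      have : ∑ k : Fin (Fintype.card J), κ = (Fintype.card J : ℝ≥0∞) * κ := by simp
      rw [← this]
      refine Finset.sum_le_sum fun k _ => ?_
      refine ENNReal.rpow_le_rpow ?_ hq.le
      have h6 := ENNReal.rpow_le_rpow (hηε.trans (hbig (e.symm k))) (by positivity : 0 ≤ 1 / p)
      rwa [← ENNReal.rpow_mul, mul_one_div_cancel hp.ne', ENNReal.rpow_one] at h6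
    have h7 : (Fintype.card J : ℝ≥0∞) ≤ R / κ :=
      (ENNReal.le_div_iff_mul_le (Or.inl hκ0) (Or.inr hRtop)).2 h5
    have h8 := h7.trans_lt hNN
    have : Fintype.card J < N := by exact_mod_cast h8
    exact this.le
  cont := by
    intro B hB hmono c hc
    have hlim := X.cont (fun n => (B n).indicator u) ((⋃ n, B n).indicator u)
      (fun n => hu.indicator (hB n)) (hu.indicator (MeasurableSet.iUnion hB))
      (fun n x => Set.indicator_nonneg (fun y _ => (hu0 y).le) _)
      (fun n x => Set.indicator_le_indicator_of_subset (hmono (Nat.le_succ n))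
        (fun y => (hu0 y).le) x)
      (fun x => by
        by_cases hx : ∃ n, x ∈ B n
        · obtain ⟨n, hn⟩ := hx
          apply tendsto_const_nhds.congr'
          filter_upwards [eventually_ge_atTop n] with m hm
          rw [Set.indicator_of_mem (hmono hm hn), Set.indicator_of_mem (Set.mem_iUnion.2 ⟨n, hn⟩)]
        · have h1 : x ∉ ⋃ n, B n := fun h => hx (Set.mem_iUnion.1 h)
          push Not at hx
          simp [hx])
    exact le_of_tendsto' ((ENNReal.continuous_rpow_const (y := p)).continuousAt.tendsto.comp hlim) hc

/-- If an admissible quasinorm is `p`-normable and satisfies a crude lower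
`q`-estimate, then there is a finite Borel measure `μ` on `Ω` such that `‖f‖_X = 0` iff
`f = 0` `μ`-a.e. -/
theorem pNormable_crude_lower_estimate_exists_control_measure
    {Ω : Type*} [TopologicalSpace Ω] [CompactSpace Ω] [T2Space Ω]
    [MeasurableSpace Ω] [BorelSpace Ω]
    (p q b : ℝ) (hp : 0 < p) (hq : 0 < q)
    (X : AdmissibleQuasinorm Ω)
    (hXp : ∀ f g : Ω → ℝ, Measurable f → Measurable g →
      X.N (fun x => f x + g x) ^ p ≤ X.N f ^ p + X.N g ^ p)
    (hXb : CrudeLower X q b) :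
    ∃ μ : Measure Ω, IsFiniteMeasure μ ∧
      ∀ f : Ω → ℝ, Measurable f → (X.N f = 0 ↔ f =ᵐ[μ] 0) := by
  obtain ⟨u, hu, hu0, hN0, hN⟩ := X.exists_pos
  obtain ⟨μ, hμ, h⟩ := (X.ueSub p q b hp hq hXp hXb u hu hu0 hN0 hN).control
  refine ⟨μ, hμ, fun f hf => ?_⟩
  have hS : MeasurableSet {x | f x ≠ 0} := (hf (measurableSet_singleton 0)).compl
  have h1 : f =ᵐ[μ] 0 ↔ μ {x | f x ≠ 0} = 0 := Iff.rfl
  have h2 := h _ hS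
  beta_reduce at h2
  rw [ENNReal.rpow_eq_zero_iff_of_pos hp] at h2
  rw [h1, ← h2]
  constructor
  · exact X.null_of_supp _ _ hf (hu.indicator hS) (fun x hx => by simp [hx])
  · refine X.null_of_supp _ _ (hu.indicator hS) hf (fun x hx => ?_)
    by_contra hc
    rw [Set.indicator_of_mem (by exact hc)] at hx
    exact (hu0 x).ne' hx
end

section
/- Suppose 0 < p < q < ∞ and μ is a finite Borel measure on a compact Hausdorff space Ω. Then for every Borel function f, ‖f‖_{Λ_{p,q}(μ)} ≤ ‖f‖_{L_{p,q}(μ)} ≤ ((1+θ)^{2(1+θ)} θ^{−θ})^{1/q} ‖f‖_{Λ_{p,q}(μ)}, where 1 + θ = q/p. -/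
open Set Filter Topology MeasureTheory ENNReal

/-- `A : Fin n → Set Ω` is a finite Borel partition of `Ω`. -/
def IsBorelPartition {Ω : Type*} [MeasurableSpace Ω] {n : ℕ} (A : Fin n → Set Ω) : Prop :=
  (∀ i, MeasurableSet (A i)) ∧ Pairwise (Function.onFun Disjoint A) ∧ (⋃ i, A i) = univ

/-- The `Λ_{p,q}(μ)` functional for `p < q`:
`sup (Σᵢ (inf_{ω ∈ Aᵢ} |f ω|)^q μ(Aᵢ)^{q/p})^{1/q}` over finite Borel partitions. -/
noncomputable def LambdaSup {Ω : Type*} [MeasurableSpace Ω]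
    (μ : Measure Ω) (p q : ℝ) (f : Ω → ℝ) : ℝ≥0∞ :=
  ⨆ (n : ℕ) (A : Fin n → Set Ω) (_ : IsBorelPartition A),
    (∑ i, (⨅ x ∈ A i, ENNReal.ofReal |f x|) ^ q * μ (A i) ^ (q / p)) ^ (1 / q)

/-- The `Λ_{p,q}(μ)` functional for `q < p`:
`inf (Σᵢ (sup_{ω ∈ Aᵢ} |f ω|)^q μ(Aᵢ)^{q/p})^{1/q}` over finite Borel partitions.
(Here `LambdaInf μ p q` has inner exponent `q` and measure exponent `q/p`.) -/
noncomputable def LambdaInf {Ω : Type*} [MeasurableSpace Ω]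
    (μ : Measure Ω) (p q : ℝ) (f : Ω → ℝ) : ℝ≥0∞ :=
  ⨅ (n : ℕ) (A : Fin n → Set Ω) (_ : IsBorelPartition A),
    (∑ i, (⨆ x ∈ A i, ENNReal.ofReal |f x|) ^ q * μ (A i) ^ (q / p)) ^ (1 / q)

/-- The decreasing rearrangement `f*(t) = inf_{μ(E) ≤ t} sup_{ω ∉ E} |f ω|`. -/
noncomputable def decRearr {Ω : Type*} [MeasurableSpace Ω]
    (μ : Measure Ω) (f : Ω → ℝ) (t : ℝ) : ℝ≥0∞ :=
  ⨅ (E : Set Ω) (_ : MeasurableSet E) (_ : μ E ≤ ENNReal.ofReal t),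
    ⨆ x ∈ Eᶜ, ENNReal.ofReal |f x|

/-- The Lorentz quasinorm `‖f‖_{L_{p,q}(μ)} = (∫₀^∞ (q/p) t^{q/p-1} f*(t)^q dt)^{1/q}`. -/
noncomputable def LorentzNorm {Ω : Type*} [MeasurableSpace Ω]
    (μ : Measure Ω) (p q : ℝ) (f : Ω → ℝ) : ℝ≥0∞ :=
  (∫⁻ t in Ioi (0 : ℝ),
      ENNReal.ofReal (q / p * t ^ (q / p - 1)) * decRearr μ f t ^ q) ^ (1 / q)


/-- distribution function -/
noncomputable def distF {Ω : Type*} [MeasurableSpace Ω] (μ : Measure Ω) (q : ℝ) (f : Ω → ℝ) (s : ℝ) : ℝ≥0∞ :=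
  μ {x | s < |f x| ^ q}

theorem decRearr_antitone {Ω : Type*} [MeasurableSpace Ω] (μ : Measure Ω) (f : Ω → ℝ) :
    Antitone (decRearr μ f) := by
  intro s t hst
  unfold decRearr
  refine le_iInf fun E => le_iInf fun hE => le_iInf fun h => ?_
  exact iInf_le_of_le E (iInf_le_of_le hE (iInf_le_of_le (h.trans (ENNReal.ofReal_le_ofReal hst)) le_rfl))

theorem distF_anti {Ω : Type*} [MeasurableSpace Ω] (μ : Measure Ω) (q : ℝ) (f : Ω → ℝ) :
    Antitone (distF μ q f) := by
  intro s t hst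
  exact measure_mono fun x hx => lt_of_le_of_lt hst hx

theorem lt_decRearr_iff {Ω : Type*} [MeasurableSpace Ω] (μ : Measure Ω) [IsFiniteMeasure μ]
    {q : ℝ} (hq : 0 < q) (f : Ω → ℝ) (hf : Measurable f) {s t : ℝ} (hs : 0 < s) :
    ENNReal.ofReal s < decRearr μ f t ^ q ↔ ENNReal.ofReal t < distF μ q f s := by
  have key : ∀ x, ENNReal.ofReal |f x| ^ q = ENNReal.ofReal (|f x| ^ q) := fun x =>
    ENNReal.ofReal_rpow_of_nonneg (abs_nonneg _) hq.le
  have hmeas : Measurable fun x => |f x| ^ q := (hf.abs).pow_const q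
  rw [← not_iff_not, not_lt, not_lt]
  constructor
  · intro h
    rw [← ENNReal.le_rpow_inv_iff hq] at h
    -- for every v > s, distF v ≤ t
    have h1 : ∀ v, s < v → distF μ q f v ≤ ENNReal.ofReal t := by
      intro v hv
      have h2 : decRearr μ f t < ENNReal.ofReal v ^ q⁻¹ := lt_of_le_of_lt h
        (ENNReal.rpow_lt_rpow ((ENNReal.ofReal_lt_ofReal_iff (hs.trans hv)).2 hv) (inv_pos.2 hq))
      unfold decRearr at h2
      simp only [iInf_lt_iff] at h2
      obtain ⟨E, hE, hEt, h3⟩ := h2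
      refine (measure_mono ?_).trans hEt
      intro x hx
      by_contra hxE
      have h4 : ENNReal.ofReal |f x| ≤ ENNReal.ofReal v ^ q⁻¹ :=
        (le_iSup₂ (f := fun x (_ : x ∈ Eᶜ) => ENNReal.ofReal |f x|) x hxE).trans h3.le
      rw [ENNReal.le_rpow_inv_iff hq, key, ENNReal.ofReal_le_ofReal_iff (hs.trans hv).le] at h4
      exact absurd hx (not_lt.2 h4)
    have hU : {x | s < |f x| ^ q} = ⋃ n : ℕ, {x | s + 1 / ((n : ℝ) + 1) < |f x| ^ q} := by
      ext x
      simp only [mem_ofPred_eq, mem_iUnion]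
      constructor
      · intro hx
        obtain ⟨n, hn⟩ := exists_nat_one_div_lt (sub_pos.2 hx)
        exact ⟨n, by linarith⟩
      · rintro ⟨n, hn⟩
        have : (0 : ℝ) < 1 / ((n : ℝ) + 1) := by positivity
        linarith
    unfold distF
    rw [hU, Monotone.measure_iUnion]
    · refine iSup_le fun n => h1 _ ?_
      have : (0 : ℝ) < 1 / ((n : ℝ) + 1) := by positivity
      linarith
    · intro m n hmn x hx
      have : 1 / ((n : ℝ) + 1) ≤ 1 / ((m : ℝ) + 1) := by gcongr
      simp only [mem_ofPred_eq] at hx ⊢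
      linarith
  · intro h
    rw [← ENNReal.le_rpow_inv_iff hq]
    unfold decRearr
    refine iInf_le_of_le {x | s < |f x| ^ q} (iInf_le_of_le (measurableSet_lt measurable_const hmeas)
      (iInf_le_of_le h (iSup₂_le fun x hx => ?_)))
    rw [ENNReal.le_rpow_inv_iff hq, key]
    exact ENNReal.ofReal_le_ofReal (not_lt.1 hx)

theorem volume_layer (X : ℝ≥0∞) :
    ∫⁻ s in Ioi (0 : ℝ), (if ENNReal.ofReal s < X then 1 else 0) = X := by
  have : (fun s : ℝ => if ENNReal.ofReal s < X then (1 : ℝ≥0∞) else 0) =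
      indicator {s | ENNReal.ofReal s < X} 1 := by
    ext s; simp [indicator]
  rw [this, lintegral_indicator_one (measurableSet_lt ENNReal.measurable_ofReal measurable_const),
    Measure.restrict_apply (measurableSet_lt ENNReal.measurable_ofReal measurable_const)]
  rcases eq_or_ne X ⊤ with rfl | hX
  · simp
  · have : {s : ℝ | ENNReal.ofReal s < X} ∩ Ioi 0 = Ioo 0 X.toReal := by
      ext s
      simp only [mem_inter_iff, mem_ofPred_eq, mem_Ioi, mem_Ioo]
      constructor
      · rintro ⟨h, h0⟩
        exact ⟨h0, (ENNReal.ofReal_lt_iff_lt_toReal h0.le hX).1 h⟩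
      · rintro ⟨h0, h⟩
        exact ⟨(ENNReal.ofReal_lt_iff_lt_toReal h0.le hX).2 h, h0⟩
    rw [this, Real.volume_Ioo, sub_zero, ENNReal.ofReal_toReal hX]

theorem weight_layer {r : ℝ} (hr : 1 < r) {X : ℝ≥0∞} (hX : X ≠ ⊤) :
    ∫⁻ t in Ioi (0 : ℝ), ENNReal.ofReal (r * t ^ (r - 1)) * (if ENNReal.ofReal t < X then 1 else 0)
      = X ^ r := by
  have hm : MeasurableSet {t : ℝ | ENNReal.ofReal t < X} :=
    measurableSet_lt ENNReal.measurable_ofReal measurable_const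
  have : (fun t : ℝ => ENNReal.ofReal (r * t ^ (r - 1)) * (if ENNReal.ofReal t < X then (1 : ℝ≥0∞) else 0)) =
      indicator {s | ENNReal.ofReal s < X} (fun t => ENNReal.ofReal (r * t ^ (r - 1))) := by
    ext s; simp [indicator]
  rw [this, lintegral_indicator hm, Measure.restrict_restrict hm]
  have : {s : ℝ | ENNReal.ofReal s < X} ∩ Ioi 0 = Ioo 0 X.toReal := by
      ext s
      simp only [mem_inter_iff, mem_ofPred_eq, mem_Ioi, mem_Ioo]
      constructor
      · rintro ⟨h, h0⟩
        exact ⟨h0, (ENNReal.ofReal_lt_iff_lt_toReal h0.le hX).1 h⟩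
      · rintro ⟨h0, h⟩
        exact ⟨(ENNReal.ofReal_lt_iff_lt_toReal h0.le hX).2 h, h0⟩
  rw [this, setLIntegral_congr Ioo_ae_eq_Ioc]
  have hY : (0 : ℝ) ≤ X.toReal := ENNReal.toReal_nonneg
  have hint : IntervalIntegrable (fun t : ℝ => r * t ^ (r - 1)) volume 0 X.toReal :=
    (intervalIntegral.intervalIntegrable_rpow' (by linarith)).const_mul r
  rw [← ofReal_integral_eq_lintegral_ofReal]
  · rw [← intervalIntegral.integral_of_le hY, intervalIntegral.integral_const_mul,
      integral_rpow (Or.inl (by linarith))]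
    rw [sub_add_cancel, Real.zero_rpow (by linarith), sub_zero, mul_div_cancel₀ _ (by linarith : r ≠ 0),
      ← ENNReal.ofReal_rpow_of_nonneg hY (by linarith), ENNReal.ofReal_toReal hX]
  · exact (intervalIntegrable_iff_integrableOn_Ioc_of_le hY).1 hint
  · refine (ae_restrict_iff' measurableSet_Ioc).2 (ae_of_all _ fun t ht => ?_)
    have := ht.1.le
    have : 0 ≤ r := by linarith
    simp only [Pi.zero_apply]
    positivity

theorem lorentz_layer {Ω : Type*} [MeasurableSpace Ω] (μ : Measure Ω) [IsFiniteMeasure μ]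
    {q r : ℝ} (hq : 0 < q) (hr : 1 < r) (f : Ω → ℝ) (hf : Measurable f) :
    ∫⁻ t in Ioi (0 : ℝ), ENNReal.ofReal (r * t ^ (r - 1)) * decRearr μ f t ^ q
      = ∫⁻ s in Ioi (0 : ℝ), distF μ q f s ^ r := by
  have hd : Measurable (decRearr μ f) := (decRearr_antitone μ f).measurable
  have hw : Measurable fun t : ℝ => ENNReal.ofReal (r * t ^ (r - 1)) := by fun_prop
  calc _ = ∫⁻ t in Ioi (0 : ℝ), ∫⁻ s in Ioi (0 : ℝ), ENNReal.ofReal (r * t ^ (r - 1)) *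
        (if ENNReal.ofReal s < decRearr μ f t ^ q then 1 else 0) := by
        refine lintegral_congr fun t => ?_
        rw [lintegral_const_mul' _ _ ENNReal.ofReal_ne_top, volume_layer]
    _ = ∫⁻ s in Ioi (0 : ℝ), ∫⁻ t in Ioi (0 : ℝ), ENNReal.ofReal (r * t ^ (r - 1)) *
        (if ENNReal.ofReal s < decRearr μ f t ^ q then 1 else 0) := by
        refine lintegral_lintegral_swap (Measurable.aemeasurable ?_)
        refine (hw.comp measurable_fst).mul (Measurable.ite ?_ measurable_const measurable_const)
        exact measurableSet_lt (ENNReal.measurable_ofReal.comp measurable_snd)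
          ((hd.comp measurable_fst).pow_const q)
    _ = _ := by
        refine setLIntegral_congr_fun measurableSet_Ioi fun s hs => ?_
        simp only [lt_decRearr_iff μ hq f hf hs]
        exact weight_layer hr (measure_ne_top μ _)

theorem sum_rpow_le_rpow_sum' {ι : Type*} (s : Finset ι) (g : ι → ℝ≥0∞) {r : ℝ} (hr : 1 ≤ r) :
    ∑ i ∈ s, g i ^ r ≤ (∑ i ∈ s, g i) ^ r := by
  classical
  induction s using Finset.induction_on with
  | empty => simp
  | insert a s ha ih =>
    rw [Finset.sum_insert ha, Finset.sum_insert ha]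
    exact (add_le_add le_rfl ih).trans (ENNReal.add_rpow_le_rpow_add _ _ hr)

theorem lower_bound {Ω : Type*} [MeasurableSpace Ω] (μ : Measure Ω)
    {q r : ℝ} (hq : 0 < q) (hr : 1 < r) (f : Ω → ℝ) {n : ℕ} (A : Fin n → Set Ω)
    (hA : IsBorelPartition A) :
    ∑ i, (⨅ x ∈ A i, ENNReal.ofReal |f x|) ^ q * μ (A i) ^ r
      ≤ ∫⁻ s in Ioi (0 : ℝ), distF μ q f s ^ r := by
  classical
  obtain ⟨h1, h2, h3⟩ := hA
  have hr0 : 0 < r := by linarith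
  set m : Fin n → ℝ≥0∞ := fun i => (⨅ x ∈ A i, ENNReal.ofReal |f x|) ^ q with hm
  have hmeas : ∀ i, Measurable fun s : ℝ => (if ENNReal.ofReal s < m i then (1 : ℝ≥0∞) else 0) :=
    fun i => Measurable.ite (measurableSet_lt ENNReal.measurable_ofReal measurable_const)
      measurable_const measurable_const
  calc ∑ i, m i * μ (A i) ^ r
      = ∑ i, ∫⁻ s in Ioi (0 : ℝ), (if ENNReal.ofReal s < m i then 1 else 0) * μ (A i) ^ r := by
        refine Finset.sum_congr rfl fun i _ => ?_
        rw [lintegral_mul_const _ (hmeas i), volume_layer]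
    _ = ∫⁻ s in Ioi (0 : ℝ), ∑ i, (if ENNReal.ofReal s < m i then 1 else 0) * μ (A i) ^ r := by
        rw [lintegral_finsetSum]
        exact fun i _ => (hmeas i).mul_const _
    _ ≤ _ := by
        refine setLIntegral_mono' measurableSet_Ioi fun s hs => ?_
        have e1 : ∀ i, (if ENNReal.ofReal s < m i then (1 : ℝ≥0∞) else 0) * μ (A i) ^ r =
            ((if ENNReal.ofReal s < m i then μ (A i) else 0)) ^ r := by
          intro i
          split_ifs <;> simp [hr0]
        simp only [e1]
        refine (sum_rpow_le_rpow_sum' _ _ hr.le).trans (ENNReal.rpow_le_rpow ?_ hr0.le)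
        rw [← Finset.sum_filter, ← measure_biUnion_finset (fun i _ j _ hij => h2 hij) (fun i _ => h1 i)]
        refine measure_mono fun x hx => ?_
        simp only [Finset.mem_filter, Finset.mem_univ, true_and, mem_iUnion, exists_prop] at hx
        obtain ⟨i, hi, hxi⟩ := hx
        have h4 : m i ≤ ENNReal.ofReal (|f x| ^ q) := by
          rw [← ENNReal.ofReal_rpow_of_nonneg (abs_nonneg _) hq.le]
          exact ENNReal.rpow_le_rpow (iInf₂_le x hxi) hq.le
        exact (ENNReal.ofReal_lt_ofReal_iff_of_nonneg (le_of_lt hs)).1 (hi.trans_le h4)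

theorem partition_le {Ω : Type*} [MeasurableSpace Ω] (μ : Measure Ω)
    {p q : ℝ} (hq : 0 < q) (f : Ω → ℝ) {ι : Type*} [Fintype ι] (A : ι → Set Ω)
    (h1 : ∀ i, MeasurableSet (A i)) (h2 : Pairwise (Function.onFun Disjoint A))
    (h3 : (⋃ i, A i) = univ) :
    ∑ i, (⨅ x ∈ A i, ENNReal.ofReal |f x|) ^ q * μ (A i) ^ (q / p) ≤ LambdaSup μ p q f ^ q := by
  let e := Fintype.equivFin ι
  rw [← e.symm.sum_comp]
  rw [← ENNReal.rpow_inv_le_iff hq, ← one_div]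
  unfold LambdaSup
  refine le_iSup_of_le (Fintype.card ι) (le_iSup_of_le (fun i => A (e.symm i)) (le_iSup_of_le ?_ le_rfl))
  refine ⟨fun i => h1 _, fun i j hij => h2 (e.symm.injective.ne hij), ?_⟩
  rw [← h3]
  exact e.symm.surjective.iUnion_comp A

/-- dyadic-like shell -/
def shell {Ω : Type*} (q a : ℝ) (f : Ω → ℝ) (k : ℤ) : Set Ω :=
  {x | a ^ k < |f x| ^ q ∧ |f x| ^ q ≤ a ^ (k + 1)}

theorem shell_disj {Ω : Type*} (q : ℝ) {a : ℝ} (ha : 1 < a) (f : Ω → ℝ) {k l : ℤ} (h : k ≠ l) :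
    Disjoint (shell q a f k) (shell q a f l) := by
  rw [Set.disjoint_left]
  rintro x ⟨h1, h2⟩ ⟨h3, h4⟩
  have h5 := (zpow_lt_zpow_iff_right₀ ha).1 (h1.trans_le h4)
  have h6 := (zpow_lt_zpow_iff_right₀ ha).1 (h3.trans_le h2)
  omega

theorem shell_sum_le {Ω : Type*} [MeasurableSpace Ω] (μ : Measure Ω)
    {p q a : ℝ} (hq : 0 < q) (ha : 1 < a) (f : Ω → ℝ) (hf : Measurable f) :
    ∑' k : ℤ, ENNReal.ofReal (a ^ k) * μ (shell q a f k) ^ (q / p) ≤ LambdaSup μ p q f ^ q := by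
  classical
  have hmeas : Measurable fun x => |f x| ^ q := (hf.abs).pow_const q
  have hms : ∀ k, MeasurableSet (shell q a f k) := fun k =>
    (measurableSet_lt measurable_const hmeas).inter (measurableSet_le hmeas measurable_const)
  rw [ENNReal.tsum_eq_iSup_sum]
  refine iSup_le fun s => ?_
  let A : Option s → Set Ω := fun o => o.elim (⋃ k ∈ s, shell q a f k)ᶜ (fun k => shell q a f k)
  have hA := partition_le (p := p) μ hq f A ?_ ?_ ?_
  · rw [Fintype.sum_option] at hA
    refine le_trans ?_ (le_add_self.trans hA)
    rw [← Finset.sum_coe_sort s]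
    refine Finset.sum_le_sum fun k _ => mul_le_mul_left ?_ _
    rw [← ENNReal.rpow_inv_le_iff hq]
    refine le_iInf₂ fun x hx => ?_
    rw [ENNReal.rpow_inv_le_iff hq, ENNReal.ofReal_rpow_of_nonneg (abs_nonneg _) hq.le]
    exact ENNReal.ofReal_le_ofReal (le_of_lt hx.1)
  · rintro (_ | k)
    · exact (Finset.measurableSet_biUnion _ fun k _ => hms k).compl
    · exact hms k
  · rintro (_ | k) (_ | l) h
    · exact absurd rfl h
    · exact Set.disjoint_left.2 fun x hx hx' => hx (mem_biUnion l.2 hx')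
    · exact Set.disjoint_left.2 fun x hx' hx => hx (mem_biUnion k.2 hx')
    · exact shell_disj q ha f fun hkl => h (congrArg some (Subtype.ext hkl))
  · rw [eq_univ_iff_forall]
    intro x
    by_cases hx : x ∈ ⋃ k ∈ s, shell q a f k
    · simp only [mem_iUnion] at hx
      obtain ⟨k, hk, hx⟩ := hx
      exact mem_iUnion.2 ⟨some ⟨k, hk⟩, hx⟩
    · exact mem_iUnion.2 ⟨none, hx⟩

theorem distF_le_shell {Ω : Type*} [MeasurableSpace Ω] (μ : Measure Ω)
    {q a : ℝ} (ha : 1 < a) (f : Ω → ℝ) (k : ℤ) :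
    distF μ q f (a ^ k) ≤ ∑' j : ℕ, μ (shell q a f (k + j)) := by
  refine (measure_mono fun x hx => ?_).trans (measure_iUnion_le _)
  have ha0 : 0 < a := by linarith
  have hx' : a ^ k < |f x| ^ q := hx
  obtain ⟨n, hn1, hn2⟩ := exists_mem_Ioc_zpow ((zpow_pos ha0 k).trans hx') ha
  have := (zpow_lt_zpow_iff_right₀ ha).1 (hx'.trans_le hn2)
  refine mem_iUnion.2 ⟨(n - k).toNat, ?_⟩
  have e : k + ((n - k).toNat : ℤ) = n := by omega
  rw [e]
  exact ⟨hn1, hn2⟩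

theorem hardy_point {r : ℝ} (hr : 1 < r) {B : ℝ≥0∞} (hB : B ≠ 0) (hB' : B ≠ ⊤) (m : ℕ → ℝ≥0∞) :
    (∑' j, m j) ^ r ≤ ((1 - B⁻¹)⁻¹) ^ (r - 1) * ∑' j, B⁻¹ ^ j * ((B ^ r) ^ j * m j ^ r) := by
  have hr0 : 0 < r := by linarith
  rw [← ENNReal.le_rpow_inv_iff hr0]
  refine ENNReal.tsum_le_of_sum_range_le fun n => ?_
  have h := ENNReal.inner_le_weight_mul_Lp_of_nonneg (Finset.range n) hr.le (fun j => B⁻¹ ^ j)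
    (fun j => B ^ j * m j)
  have e1 : ∀ j, B⁻¹ ^ j * (B ^ j * m j) = m j := fun j => by
    rw [← mul_assoc, ← mul_pow, ENNReal.inv_mul_cancel hB hB', one_pow, one_mul]
  have e2 : ∀ j, (B ^ j * m j) ^ r = (B ^ r) ^ j * m j ^ r := fun j => by
    rw [ENNReal.mul_rpow_of_nonneg _ _ hr0.le, ← ENNReal.rpow_natCast, ← ENNReal.rpow_natCast,
      ← ENNReal.rpow_mul, ← ENNReal.rpow_mul, mul_comm r]
  simp only [e1, e2] at h
  refine h.trans ?_
  rw [ENNReal.mul_rpow_of_nonneg _ _ (inv_nonneg.2 hr0.le), ← ENNReal.rpow_mul]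
  have e3 : (r - 1) * r⁻¹ = 1 - r⁻¹ := by field_simp
  rw [e3]
  have e4 : 0 ≤ 1 - r⁻¹ := sub_nonneg.2 (inv_le_one_of_one_le₀ hr.le)
  gcongr
  · rw [← ENNReal.tsum_geometric]
    exact ENNReal.sum_le_tsum _
  · exact ENNReal.sum_le_tsum _

theorem hardy {r : ℝ} (hr : 1 < r) (m : ℤ → ℝ≥0∞) :
    ∑' k : ℤ, ENNReal.ofReal ((r ^ r) ^ k) * (∑' j : ℕ, m (k + j)) ^ r ≤
      ((1 - (ENNReal.ofReal r)⁻¹)⁻¹) ^ r * ∑' k : ℤ, ENNReal.ofReal ((r ^ r) ^ k) * m k ^ r := by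
  have hr0 : 0 < r := by linarith
  set B := ENNReal.ofReal r with hBdef
  have hB : B ≠ 0 := by simp [hBdef, hr0]
  have hB' : B ≠ ⊤ := ENNReal.ofReal_ne_top
  have ha0 : 0 < r ^ r := Real.rpow_pos_of_pos hr0 r
  have hD1 : 1 - B⁻¹ ≠ 0 := by
    have : 1 < B := by rw [hBdef]; simpa using hr
    exact (tsub_pos_of_lt (ENNReal.inv_lt_one.2 this)).ne'
  set D := (1 - B⁻¹)⁻¹ with hD
  have hDt : D ≠ ⊤ := ENNReal.inv_ne_top.2 hD1
  have hD0 : D ≠ 0 := ENNReal.inv_ne_zero.2 (ne_top_of_le_ne_top ENNReal.one_ne_top tsub_le_self)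
  have hBr : B ^ r = ENNReal.ofReal (r ^ r) := ENNReal.ofReal_rpow_of_nonneg hr0.le hr0.le
  have e : ∀ (k : ℤ) (j : ℕ), ENNReal.ofReal ((r ^ r) ^ k) * (D ^ (r - 1) * (B⁻¹ ^ j * ((B ^ r) ^ j * m (k + j) ^ r)))
      = D ^ (r - 1) * (B⁻¹ ^ j * (ENNReal.ofReal ((r ^ r) ^ (k + j)) * m (k + j) ^ r)) := by
    intro k j
    rw [zpow_add₀ ha0.ne', ENNReal.ofReal_mul (zpow_pos ha0 k).le, zpow_natCast,
      ENNReal.ofReal_pow ha0.le, hBr]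
    ring
  calc _ ≤ ∑' k : ℤ, ENNReal.ofReal ((r ^ r) ^ k) * (D ^ (r - 1) * ∑' j : ℕ, B⁻¹ ^ j * ((B ^ r) ^ j * m (k + j) ^ r)) :=
        ENNReal.tsum_le_tsum fun k => mul_le_mul_right (hardy_point hr hB hB' _) _
    _ = ∑' k : ℤ, ∑' j : ℕ, D ^ (r - 1) * (B⁻¹ ^ j * (ENNReal.ofReal ((r ^ r) ^ (k + j)) * m (k + j) ^ r)) := by
        simp only [← ENNReal.tsum_mul_left, e]
    _ = ∑' j : ℕ, ∑' k : ℤ, D ^ (r - 1) * (B⁻¹ ^ j * (ENNReal.ofReal ((r ^ r) ^ (k + j)) * m (k + j) ^ r)) :=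
        ENNReal.tsum_comm
    _ = ∑' j : ℕ, D ^ (r - 1) * (B⁻¹ ^ j * ∑' k : ℤ, (ENNReal.ofReal ((r ^ r) ^ k) * m k ^ r)) := by
        refine tsum_congr fun j => ?_
        rw [ENNReal.tsum_mul_left, ENNReal.tsum_mul_left,
          ← (Equiv.addRight (j : ℤ)).tsum_eq (fun k => ENNReal.ofReal ((r ^ r) ^ k) * m k ^ r)]
        rfl
    _ = D ^ (r - 1) * (D * ∑' k : ℤ, (ENNReal.ofReal ((r ^ r) ^ k) * m k ^ r)) := by
        rw [ENNReal.tsum_mul_left, ENNReal.tsum_mul_right, ENNReal.tsum_geometric]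
    _ = _ := by
        rw [← mul_assoc]
        congr 1
        conv_lhs => rw [← ENNReal.rpow_one D, ← ENNReal.rpow_mul, one_mul]
        rw [← ENNReal.rpow_add _ _ hD0 hDt, sub_add_cancel]

theorem layer_le {F : ℝ → ℝ≥0∞} (hF : Antitone F) {a r : ℝ} (ha : 1 < a) (hr : 0 < r) :
    ∫⁻ s in Ioi (0 : ℝ), F s ^ r ≤
      ENNReal.ofReal (a - 1) * ∑' k : ℤ, ENNReal.ofReal (a ^ k) * F (a ^ k) ^ r := by
  have ha0 : 0 < a := by linarith
  have hsub : Ioi (0 : ℝ) ⊆ ⋃ k : ℤ, Ioc (a ^ k) (a ^ (k + 1)) := fun s hs => by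
    obtain ⟨n, hn⟩ := exists_mem_Ioc_zpow (mem_Ioi.1 hs) ha
    exact mem_iUnion.2 ⟨n, hn⟩
  refine (lintegral_mono_set hsub).trans ((lintegral_iUnion_le _ _).trans ?_)
  rw [← ENNReal.tsum_mul_left]
  refine ENNReal.tsum_le_tsum fun k => ?_
  calc _ ≤ ∫⁻ s in Ioc (a ^ k) (a ^ (k + 1)), F (a ^ k) ^ r :=
        setLIntegral_mono' measurableSet_Ioc fun s hs => ENNReal.rpow_le_rpow (hF hs.1.le) hr.le
    _ = _ := by
        rw [setLIntegral_const, Real.volume_Ioc, ← mul_assoc, ← ENNReal.ofReal_mul (by linarith),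
          zpow_add_one₀ ha0.ne', mul_comm]
        congr 2
        ring

theorem const_le {θ : ℝ} (hθ : 0 < θ) :
    ENNReal.ofReal ((1 + θ) ^ (1 + θ) - 1) * ((1 - (ENNReal.ofReal (1 + θ))⁻¹)⁻¹) ^ (1 + θ) ≤
      ENNReal.ofReal ((1 + θ) ^ (2 * (1 + θ)) * θ ^ (-θ)) := by
  have h1 : 0 < 1 + θ := by linarith
  have e : (1 - (ENNReal.ofReal (1 + θ))⁻¹)⁻¹ = ENNReal.ofReal ((1 + θ) / θ) := by
    rw [← ENNReal.ofReal_inv_of_pos h1, ← ENNReal.ofReal_one, ← ENNReal.ofReal_sub _ (by positivity),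
      ← ENNReal.ofReal_inv_of_pos]
    · have e0 : 1 - (1 + θ)⁻¹ = θ / (1 + θ) := by
        rw [eq_div_iff h1.ne', sub_mul, inv_mul_cancel₀ h1.ne']; ring
      rw [e0, inv_div]
    · have : (1 + θ)⁻¹ < 1 := inv_lt_one_of_one_lt₀ (by linarith)
      linarith
  have hge : 1 ≤ (1 + θ) ^ (1 + θ) := Real.one_le_rpow (by linarith) h1.le
  rw [e, ENNReal.ofReal_rpow_of_nonneg (by positivity) h1.le, ← ENNReal.ofReal_mul (by linarith)]
  refine ENNReal.ofReal_le_ofReal ?_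
  set P := (1 + θ) ^ (1 + θ) with hP
  have hP0 : 0 < P := by positivity
  have hb : 1 - θ ≤ P⁻¹ := by
    have := one_add_mul_self_le_rpow_one_add (s := (1 + θ)⁻¹ - 1) (by
      have : 0 < (1 + θ)⁻¹ := by positivity
      linarith) (p := 1 + θ) (by linarith)
    rw [add_sub_cancel, Real.inv_rpow h1.le] at this
    refine le_trans (le_of_eq ?_) this
    field_simp
    ring
  have hb2 : P - 1 ≤ P * θ := by
    have := mul_le_mul_of_nonneg_left hb hP0.le
    rw [mul_inv_cancel₀ hP0.ne'] at this
    linarith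
  have e2 : (1 + θ) ^ (2 * (1 + θ)) = P * P := by
    rw [two_mul, Real.rpow_add h1]
  have e3 : ((1 + θ) / θ) ^ (1 + θ) = P * (θ ^ (-θ) * θ⁻¹) := by
    rw [Real.div_rpow h1.le hθ.le, Real.rpow_add hθ, Real.rpow_one, Real.rpow_neg hθ.le, hP]
    field_simp
  rw [e2, e3]
  have : 0 < θ ^ (-θ) := by positivity
  calc _ ≤ (P * θ) * (P * (θ ^ (-θ) * θ⁻¹)) := by gcongr
    _ = _ := by field_simp

/-- For `0 < p < q < ∞` and a finite Borel measure `μ`,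
`‖f‖_{Λ_{p,q}} ≤ ‖f‖_{L_{p,q}} ≤ ((1+θ)^{2(1+θ)} θ^{-θ})^{1/q} ‖f‖_{Λ_{p,q}}`
where `1 + θ = q/p`. -/
theorem lambdaSup_le_lorentz_le
    {Ω : Type*} [TopologicalSpace Ω] [CompactSpace Ω] [T2Space Ω]
    [MeasurableSpace Ω] [BorelSpace Ω]
    (p q θ : ℝ) (hp : 0 < p) (hpq : p < q) (hθ : 1 + θ = q / p)
    (μ : Measure Ω) [IsFiniteMeasure μ]
    (f : Ω → ℝ) (hf : Measurable f) :
    LambdaSup μ p q f ≤ LorentzNorm μ p q f ∧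
    LorentzNorm μ p q f ≤
      ENNReal.ofReal (((1 + θ) ^ (2 * (1 + θ)) * θ ^ (-θ)) ^ (1 / q)) *
        LambdaSup μ p q f := by
  have hq : 0 < q := hp.trans hpq
  have hr : 1 < q / p := (one_lt_div hp).2 hpq
  have hθ0 : 0 < θ := by linarith
  constructor
  · unfold LambdaSup LorentzNorm
    refine iSup_le fun n => iSup_le fun A => iSup_le fun hA => ?_
    refine ENNReal.rpow_le_rpow ?_ (by positivity)
    rw [lorentz_layer μ hq hr f hf]
    exact lower_bound μ hq hr f A hA
  · have hC : 0 ≤ (1 + θ) ^ (2 * (1 + θ)) * θ ^ (-θ) := by positivity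
    unfold LorentzNorm
    rw [lorentz_layer μ hq hr f hf, one_div, ENNReal.rpow_inv_le_iff hq,
      ENNReal.mul_rpow_of_nonneg _ _ hq.le,
      ENNReal.ofReal_rpow_of_nonneg (by positivity) hq.le, Real.rpow_inv_rpow hC hq.ne']
    set r := q / p with hrdef
    have ha : 1 < r ^ r := Real.one_lt_rpow hr (by linarith)
    calc ∫⁻ s in Ioi (0 : ℝ), distF μ q f s ^ r
        ≤ ENNReal.ofReal (r ^ r - 1) *
          ∑' k : ℤ, ENNReal.ofReal ((r ^ r) ^ k) * distF μ q f ((r ^ r) ^ k) ^ r :=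
          layer_le (distF_anti μ q f) ha (by linarith)
      _ ≤ ENNReal.ofReal (r ^ r - 1) *
          ∑' k : ℤ, ENNReal.ofReal ((r ^ r) ^ k) *
            (∑' j : ℕ, μ (shell q (r ^ r) f (k + j))) ^ r := by
          refine mul_le_mul_right (ENNReal.tsum_le_tsum fun k => mul_le_mul_right ?_ _) _
          exact ENNReal.rpow_le_rpow (distF_le_shell μ ha f k) (by linarith)
      _ ≤ ENNReal.ofReal (r ^ r - 1) * (((1 - (ENNReal.ofReal r)⁻¹)⁻¹) ^ r *
          ∑' k : ℤ, ENNReal.ofReal ((r ^ r) ^ k) * μ (shell q (r ^ r) f k) ^ r) :=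
          mul_le_mul_right (hardy hr fun k => μ (shell q (r ^ r) f k)) _
      _ ≤ ENNReal.ofReal (r ^ r - 1) * (((1 - (ENNReal.ofReal r)⁻¹)⁻¹) ^ r *
          LambdaSup μ p q f ^ q) :=
          mul_le_mul_right (mul_le_mul_right (shell_sum_le μ hq ha f hf) _) _
      _ ≤ _ := by
          rw [← mul_assoc, ← hθ]
          exact mul_le_mul_left (const_le hθ0) _
end

section
/- Let ‖·‖_X be an admissible extended-value quasinorm on the Borel functions of a compact Hausdorff space Ω satisfying a crude upper p-estimate with constant a and a crude lower q-estimate with constant b, where 0 < p < q < ∞. Let f ≥ 0 be a Borel function with ‖f‖_X = 1. Then there is a Borel probability measure μ on Ω such that f > 0 μ-almost everywhere and for every Borel g with ‖g‖_X < ∞, ‖g f^{−1}‖_{Λ_{p,q}(μ)} ≤ a b K_{q/p}^{−1/p} ‖g‖_X, where K_s = 2(2^s − 1)^{−1/s} − 1. -/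
open Set Filter Topology MeasureTheory ENNReal

def IsCov {Ω : Type*} [MeasurableSpace Ω] (g : Ω → ℝ) (n : ℕ) (c : Fin n → ℝ)
    (A : Fin n → Set Ω) : Prop :=
  (∀ i, 0 ≤ c i) ∧ (∀ i, MeasurableSet (A i)) ∧
    ∀ x, g x ≤ ∑ i, c i * (A i).indicator (fun _ => (1 : ℝ)) x

def covVals {Ω : Type*} [MeasurableSpace Ω] (φ : Set Ω → ℝ) (g : Ω → ℝ) : Set ℝ :=
  {t | ∃ (n : ℕ) (c : Fin n → ℝ) (A : Fin n → Set Ω), IsCov g n c A ∧ t = ∑ i, c i * φ (A i)}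

lemma covVals_add {Ω : Type*} [MeasurableSpace Ω] (φ : Set Ω → ℝ) (g h : Ω → ℝ) {s t : ℝ}
    (hs : s ∈ covVals φ g) (ht : t ∈ covVals φ h) : s + t ∈ covVals φ (g + h) := by
  obtain ⟨n, c, A, ⟨h1, h2, h3⟩, rfl⟩ := hs
  obtain ⟨m, d, B, ⟨k1, k2, k3⟩, rfl⟩ := ht
  refine ⟨n + m, Fin.append c d, Fin.append A B, ⟨?_, ?_, ?_⟩, ?_⟩
  · intro i; refine Fin.addCases (fun i => ?_) (fun i => ?_) i <;> simp [h1, k1]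
  · intro i; refine Fin.addCases (fun i => ?_) (fun i => ?_) i <;> simp [h2, k2]
  · intro x
    simp only [Fin.sum_univ_add, Fin.append_left, Fin.append_right, Pi.add_apply]
    exact add_le_add (h3 x) (k3 x)
  · simp [Fin.sum_univ_add]

lemma covVals_smul {Ω : Type*} [MeasurableSpace Ω] (φ : Set Ω → ℝ) (g : Ω → ℝ) {s r : ℝ}
    (hr : 0 ≤ r) (hs : s ∈ covVals φ g) : r * s ∈ covVals φ (r • g) := by
  obtain ⟨n, c, A, ⟨h1, h2, h3⟩, rfl⟩ := hs
  refine ⟨n, fun i => r * c i, A, ⟨fun i => mul_nonneg hr (h1 i), h2, fun x => ?_⟩, ?_⟩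
  · simp only [Pi.smul_apply, smul_eq_mul, mul_assoc, ← Finset.mul_sum]
    exact mul_le_mul_of_nonneg_left (h3 x) hr
  · simp only [mul_assoc, ← Finset.mul_sum]

lemma hb_measure {Ω : Type*} [MeasurableSpace Ω] [Nonempty Ω] (φ : Set Ω → ℝ)
    (h0 : ∀ A, MeasurableSet A → 0 ≤ φ A) (κ : ℝ) (hκ0 : 0 ≤ κ)
    (hκ : ∀ t ∈ covVals φ (fun _ => 1), κ ≤ t) :
    ∃ μ : Set Ω → ℝ, (∀ A, MeasurableSet A → 0 ≤ μ A ∧ μ A ≤ φ A) ∧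
      (∀ A B, MeasurableSet A → MeasurableSet B → Disjoint A B → μ (A ∪ B) = μ A + μ B) ∧
      μ univ = κ := by
  classical
  have hnn : ∀ g : Ω → ℝ, ∀ t ∈ covVals φ g, 0 ≤ t := by
    rintro g t ⟨n, c, A, ⟨h1, h2, h3⟩, rfl⟩
    exact Finset.sum_nonneg fun i _ => mul_nonneg (h1 i) (h0 _ (h2 i))
  have hbdd : ∀ g : Ω → ℝ, BddBelow (covVals φ g) := fun g => ⟨0, fun t ht => hnn g t ht⟩
  have hne : ∀ g : SimpleFunc Ω ℝ, (covVals φ g).Nonempty := by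
    intro g
    refine ⟨_, 1, fun _ => ∑ y ∈ g.range, |y|, fun _ => univ, ⟨?_, ?_, ?_⟩, rfl⟩
    · intro i; exact Finset.sum_nonneg fun i _ => abs_nonneg _
    · intro i; exact MeasurableSet.univ
    · intro x
      simp only [Finset.univ_unique, indicator_univ, mul_one, Finset.sum_const,
        Finset.card_singleton, one_smul]
      exact (le_abs_self _).trans
        (Finset.single_le_sum (f := fun y : ℝ => |y|) (fun i _ => abs_nonneg _)
          (SimpleFunc.mem_range_self g x))
  let P : SimpleFunc Ω ℝ → ℝ := fun g => sInf (covVals φ g)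
  have P_smul_le : ∀ c : ℝ, 0 < c → ∀ g, P (c • g) ≤ c * P g := by
    intro c hc g
    have : P (c • g) / c ≤ P g := by
      refine le_csInf (hne g) fun t ht => ?_
      rw [div_le_iff₀ hc, mul_comm]
      refine csInf_le (hbdd _) ?_
      rw [SimpleFunc.coe_smul]
      exact covVals_smul φ _ hc.le ht
    rwa [div_le_iff₀ hc, mul_comm] at this
  have P_smul : ∀ c : ℝ, 0 < c → ∀ g, P (c • g) = c * P g := by
    intro c hc g
    refine le_antisymm (P_smul_le c hc g) ?_
    have := P_smul_le c⁻¹ (inv_pos.2 hc) (c • g)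
    rw [inv_smul_smul₀ hc.ne'] at this
    rwa [le_inv_mul_iff₀ hc] at this
  have P_add : ∀ g h, P (g + h) ≤ P g + P h := by
    intro g h
    rw [← sub_le_iff_le_add]
    refine le_csInf (hne g) fun s hs => ?_
    rw [sub_le_iff_le_add, ← sub_le_iff_le_add']
    refine le_csInf (hne h) fun t ht => ?_
    rw [sub_le_iff_le_add']
    refine csInf_le (hbdd _) ?_
    rw [SimpleFunc.coe_add]
    exact covVals_add φ _ _ hs ht
  have P_nn : ∀ g, 0 ≤ P g := fun g => le_csInf (hne g) fun t ht => hnn _ t ht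
  let one : SimpleFunc Ω ℝ := SimpleFunc.const Ω 1
  have hone : one ≠ 0 := by
    intro h
    have := congrArg (fun g : SimpleFunc Ω ℝ => g (Classical.arbitrary Ω)) h
    simp [one] at this
  have hP1 : κ ≤ P one := le_csInf (hne _) fun t ht => hκ t ht
  obtain ⟨L, hL1, hL2⟩ := exists_extension_of_le_sublinear
    (LinearPMap.mkSpanSingleton (K := ℝ) (L := ℝ) (σ := RingHom.id ℝ) one κ hone) P P_smul P_add (by
      rintro ⟨x, hx⟩
      have hx' : x ∈ Submodule.span ℝ {one} := hx
      obtain ⟨c, rfl⟩ := Submodule.mem_span_singleton.1 hx'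
      rw [LinearPMap.mkSpanSingleton'_apply]
      simp only [RingHom.id_apply, smul_eq_mul]
      rcases le_or_gt c 0 with hc | hc
      · exact (mul_nonpos_of_nonpos_of_nonneg hc hκ0).trans (P_nn _)
      · rw [P_smul c hc]; exact mul_le_mul_of_nonneg_left hP1 hc.le)
  let χ : Set Ω → SimpleFunc Ω ℝ := fun A =>
    if h : MeasurableSet A then SimpleFunc.piecewise A h one 0 else 0
  have hχ : ∀ A, MeasurableSet A → ⇑(χ A) = A.indicator (fun _ => (1 : ℝ)) := by
    intro A hA
    ext x
    simp [χ, hA, one, SimpleFunc.coe_piecewise, Set.piecewise, Set.indicator]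
  refine ⟨fun A => L (χ A), ?_, ?_, ?_⟩
  · intro A hA
    constructor
    · have h1 := hL2 (-(χ A))
      have h2 : P (-(χ A)) ≤ 0 := by
        refine csInf_le (hbdd _) ⟨0, Fin.elim0, Fin.elim0, ⟨fun i => i.elim0, fun i => i.elim0, ?_⟩, by simp⟩
        intro x
        rw [SimpleFunc.coe_neg, Pi.neg_apply, hχ A hA]
        simp [Set.indicator]; split_ifs <;> norm_num
      rw [map_neg] at h1
      linarith
    · refine (hL2 _).trans (csInf_le (hbdd _) ⟨1, fun _ => 1, fun _ => A, ⟨fun i => zero_le_one, fun i => hA, ?_⟩, by simp⟩)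
      intro x
      rw [hχ A hA]; simp
  · intro A B hA hB hd
    have : χ (A ∪ B) = χ A + χ B := by
      apply SimpleFunc.coe_injective
      rw [SimpleFunc.coe_add, hχ _ (hA.union hB), hχ A hA, hχ B hB, indicator_union_of_disjoint hd]
      rfl
    simp only [this, map_add]
  · have : χ univ = one := by
      apply SimpleFunc.coe_injective
      rw [hχ _ MeasurableSet.univ]; ext x; simp [one]
    have h2 := hL1 ⟨one, Submodule.mem_span_singleton_self one⟩
    simp only [this]
    rw [LinearPMap.mkSpanSingleton_apply] at h2
    exact h2

lemma real_step (s x y κ m : ℝ) (hs : 1 < s) (hκ : 0 < κ) (hm : 0 < m) (hy : 0 < y) (hyx : y ≤ x)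
    (hym : y ≤ m) (hsel : m * x ≤ κ * y) (v : ℝ) (hv0 : 0 ≤ v)
    (hv : v ^ s ≤ x ^ s - (x - y) ^ s) :
    v + s ^ (1 + 1 / s) * κ ^ (1 - 1 / s) * (m - y) ^ (1 / s) ≤
      s ^ (1 + 1 / s) * κ ^ (1 - 1 / s) * m ^ (1 / s) := by
  have hs0 : 0 < s := by linarith
  have hx : 0 < x := by linarith
  -- x^s - (x-y)^s ≤ s x^(s-1) y
  have h1 : x ^ s - (x - y) ^ s ≤ s * x ^ (s - 1) * y := by
    have hb := one_add_mul_self_le_rpow_one_add (s := -(y / x)) (p := s)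
      (by rw [neg_le_neg_iff, div_le_one hx]; exact hyx) hs.le
    have h2 : (x - y) = x * (1 + -(y / x)) := by field_simp; ring
    rw [h2, Real.mul_rpow hx.le (by rw [← sub_eq_add_neg, sub_nonneg, div_le_one hx]; exact hyx)]
    have h3 : x ^ (s - 1) * y = x ^ s * (y / x) := by
      rw [Real.rpow_sub_one hx.ne']; field_simp
    rw [mul_assoc, h3]
    have := mul_le_mul_of_nonneg_left hb (Real.rpow_nonneg hx.le s)
    nlinarith
  have h2 : x ≤ κ / m * y := by
    rw [div_mul_eq_mul_div, le_div_iff₀ hm]; linarith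
  have h3 : v ^ s ≤ s * (κ / m) ^ (s - 1) * y ^ s := by
    calc v ^ s ≤ s * x ^ (s - 1) * y := hv.trans h1
      _ ≤ s * (κ / m * y) ^ (s - 1) * y := by
        gcongr
      _ = s * (κ / m) ^ (s - 1) * y ^ s := by
        rw [Real.mul_rpow (by positivity) hy.le, Real.rpow_sub_one hy.ne']
        field_simp
  have h4 : v ≤ s ^ (1 / s) * (κ / m) ^ (1 - 1 / s) * y := by
    have h5 : (v ^ s) ^ (1 / s) ≤ (s * (κ / m) ^ (s - 1) * y ^ s) ^ (1 / s) :=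
      Real.rpow_le_rpow (by positivity) h3 (by positivity)
    rw [Real.mul_rpow (by positivity) (by positivity), Real.mul_rpow (by positivity) (by positivity),
      ← Real.rpow_mul hv0, ← Real.rpow_mul hy.le, ← Real.rpow_mul (by positivity)] at h5
    have e1 : s * (1 / s) = 1 := by field_simp
    have e2 : (s - 1) * (1 / s) = 1 - 1 / s := by field_simp
    rwa [e1, e2, Real.rpow_one, Real.rpow_one] at h5
  -- concavity
  have h6 : (m - y) ^ (1 / s) ≤ m ^ (1 / s) * (1 - 1 / s * (y / m)) := by
    have h7 : m - y = m * (1 + -(y / m)) := by field_simp; ring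
    have hc : 0 ≤ 1 + -(y / m) := by
      rw [← sub_eq_add_neg, sub_nonneg, div_le_one hm]; exact hym
    rw [h7, Real.mul_rpow hm.le hc]
    gcongr
    have := rpow_one_add_le_one_add_mul_self (s := -(y / m)) (p := 1 / s)
      (by linarith) (by positivity) (by rw [div_le_one hs0]; exact hs.le)
    linarith
  have h8 : s ^ (1 + 1 / s) * κ ^ (1 - 1 / s) * (m - y) ^ (1 / s) ≤
      s ^ (1 + 1 / s) * κ ^ (1 - 1 / s) * (m ^ (1 / s) * (1 - 1 / s * (y / m))) := by gcongr
  have h9 : s ^ (1 / s) * (κ / m) ^ (1 - 1 / s) * y =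
      s ^ (1 + 1 / s) * κ ^ (1 - 1 / s) * (m ^ (1 / s) * (1 / s * (y / m))) := by
    rw [Real.rpow_add hs0, Real.rpow_one, Real.div_rpow hκ.le hm.le, Real.rpow_sub hm, Real.rpow_one]
    field_simp
  rw [h9] at h4
  linarith

lemma greedy {α : Type*} [Finite α] [Fintype (Set α)] (s : ℝ) (hs : 1 < s) (ψ : Set α → ℝ)
    (hnn : ∀ A, 0 ≤ ψ A) (hemp : ψ ∅ = 0)
    (hsub : ∀ A B, ψ (A ∪ B) ≤ ψ A + ψ B)
    (hlow : ∀ A B, Disjoint A B → ψ A ^ s + ψ B ^ s ≤ ψ (A ∪ B) ^ s)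
    (μ : Set α → ℝ) (hμ0 : ∀ A, 0 ≤ μ A) (hμψ : ∀ A, μ A ≤ ψ A)
    (hadd : ∀ A B, Disjoint A B → μ (A ∪ B) = μ A + μ B)
    (c : Set α → ℝ) (hc : ∀ S, 0 ≤ c S) (htight : ∀ S, 0 < c S → ψ S = μ S)
    (hcov : ∀ E, μ E ≤ ∑ S, c S * μ (E ∩ S)) (hpt : ∀ x, ∃ S, x ∈ S ∧ 0 < c S)
    (κ : ℝ) (hκ : ∑ S, c S * μ S ≤ κ) (E : Set α) :
    ψ E ≤ s ^ (1 + 1 / s) * κ ^ (1 - 1 / s) * μ E ^ (1 / s) := by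
  have hs0 : 0 < s := by linarith
  have hκ0 : 0 ≤ κ := (Finset.sum_nonneg fun S _ => mul_nonneg (hc S) (hμ0 S)).trans hκ
  induction E using (wellFounded_lt (α := Set α)).induction with
  | _ E ih =>
  have hμsplit : ∀ A B, μ A = μ (A ∩ B) + μ (A \ B) := by
    intro A B
    rw [← hadd _ _ (disjoint_sdiff_inter.symm), inter_union_sdiff]
  have hstep : ∀ S, 0 < c S → ψ (E ∩ S) ^ s ≤ μ S ^ s - (μ S - μ (E ∩ S)) ^ s := by
    intro S hS
    have h1 := hlow (S ∩ E) (S \ E) (disjoint_sdiff_inter.symm)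
    rw [inter_union_sdiff, htight S hS] at h1
    have h2 : μ S - μ (E ∩ S) = μ (S \ E) := by
      rw [hμsplit S E, inter_comm E S]; ring
    rw [h2, inter_comm E S]
    have h3 : μ (S \ E) ^ s ≤ ψ (S \ E) ^ s := Real.rpow_le_rpow (hμ0 _) (hμψ _) hs0.le
    linarith
  have hsubE : ∀ S, ψ E ≤ ψ (E ∩ S) + ψ (E \ S) := by
    intro S
    have := hsub (E ∩ S) (E \ S)
    rwa [inter_union_sdiff] at this
  have hlt : ∀ S, (E ∩ S).Nonempty → E \ S < E := by
    rintro S ⟨x, hx1, hx2⟩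
    exact ⟨sdiff_subset, fun h => (h hx1).2 hx2⟩
  rcases (hμ0 E).eq_or_lt with hm | hm
  · rw [← hm, Real.zero_rpow (by positivity), mul_zero]
    rcases E.eq_empty_or_nonempty with rfl | ⟨x, hx⟩
    · exact hemp.le
    obtain ⟨S, hxS, hcS⟩ := hpt x
    have h1 := ih (E \ S) (hlt S ⟨x, hx, hxS⟩)
    have hs1 := hμsplit E S
    have h2 : μ (E \ S) = 0 := le_antisymm (by linarith [hμ0 (E ∩ S)]) (hμ0 _)
    have h3 : μ (E ∩ S) = 0 := le_antisymm (by linarith [hμ0 (E \ S)]) (hμ0 _)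
    rw [h2, Real.zero_rpow (by positivity), mul_zero] at h1
    have h4 := hstep S hcS
    rw [h3, sub_zero, sub_self] at h4
    have h5 : ψ (E ∩ S) = 0 := by
      by_contra hne
      exact absurd h4 (not_le.2 (Real.rpow_pos_of_pos (lt_of_le_of_ne (hnn _) (Ne.symm hne)) _))
    linarith [hsubE S]
  · obtain ⟨S, hcS, hy, hsel⟩ : ∃ S, 0 < c S ∧ 0 < μ (E ∩ S) ∧ μ E * μ S ≤ κ * μ (E ∩ S) := by
      by_contra! hcon
      have hex : ∃ S ∈ Finset.univ, 0 < c S * μ (E ∩ S) := by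
        apply Finset.exists_lt_of_sum_lt
        simpa using hm.trans_le (hcov E)
      obtain ⟨S, -, hS⟩ := hex
      have hle : ∀ T, c T * (κ * μ (E ∩ T)) ≤ c T * (μ E * μ T) := by
        intro T
        rcases (hc T).eq_or_lt with h | h
        · simp [← h]
        refine mul_le_mul_of_nonneg_left ?_ h.le
        rcases (hμ0 (E ∩ T)).eq_or_lt with h' | h'
        · rw [← h', mul_zero]; exact mul_nonneg hm.le (hμ0 _)
        · exact (hcon T h h').le
      have hlt' : ∑ T, c T * (κ * μ (E ∩ T)) < ∑ T, c T * (μ E * μ T) := by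
        refine Finset.sum_lt_sum (fun T _ => hle T) ⟨S, Finset.mem_univ _, ?_⟩
        have h1 : 0 < c S := lt_of_le_of_ne (hc S) (fun h => by simp [← h] at hS)
        have h2 : 0 < μ (E ∩ S) := (pos_iff_pos_of_mul_pos hS).1 h1
        exact mul_lt_mul_of_pos_left (hcon S h1 h2) h1
      have e1 : ∑ T, c T * (κ * μ (E ∩ T)) = κ * ∑ T, c T * μ (E ∩ T) := by
        rw [Finset.mul_sum]; exact Finset.sum_congr rfl fun _ _ => by ring
      have e2 : ∑ T, c T * (μ E * μ T) = μ E * ∑ T, c T * μ T := by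
        rw [Finset.mul_sum]; exact Finset.sum_congr rfl fun _ _ => by ring
      rw [e1, e2] at hlt'
      have := mul_le_mul_of_nonneg_left (hcov E) hκ0
      have := mul_le_mul_of_nonneg_left hκ hm.le
      linarith
    have hne : (E ∩ S).Nonempty := by
      by_contra h
      rw [not_nonempty_iff_eq_empty] at h
      have := hμψ ∅
      rw [h] at hy; linarith
    have h1 := ih (E \ S) (hlt S hne)
    have hs1 := hμsplit E S
    have hs2 := hμsplit S E
    rw [inter_comm S E] at hs2
    have hyx : μ (E ∩ S) ≤ μ S := by linarith [hμ0 (S \ E)]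
    have hκp : 0 < κ := by
      by_contra h
      have h' : κ = 0 := le_antisymm (not_lt.1 h) hκ0
      rw [h', zero_mul] at hsel
      exact absurd hsel (not_le.2 (mul_pos hm (hy.trans_le hyx)))
    have := real_step s (μ S) (μ (E ∩ S)) κ (μ E) hs hκp hm hy hyx
      (by linarith [hμ0 (E \ S)]) hsel (ψ (E ∩ S)) (hnn _) (hstep S hcS)
    have h2 : μ E - μ (E ∩ S) = μ (E \ S) := by linarith
    rw [h2] at this
    linarith [hsubE S]

lemma fin_cover {α : Type*} [Finite α] [Nonempty α] [MeasurableSpace α]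
    [DiscreteMeasurableSpace α] (s : ℝ) (hs : 1 < s) (ψ : Set α → ℝ)
    (hnn : ∀ A, 0 ≤ ψ A) (hemp : ψ ∅ = 0)
    (hsub : ∀ A B, ψ (A ∪ B) ≤ ψ A + ψ B)
    (hlow : ∀ A B, Disjoint A B → ψ A ^ s + ψ B ^ s ≤ ψ (A ∪ B) ^ s)
    (t : ℝ) (ht : t ∈ covVals ψ (fun _ => 1)) :
    ψ univ ≤ s ^ (1 + 1 / s) * t := by
  classical
  have hs0 : 0 < s := by linarith
  have : Fintype α := Fintype.ofFinite α
  let M : Set (Set α → ℝ) := {c | c ∈ Icc 0 1 ∧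
    ∀ x, 1 ≤ ∑ S, c S * S.indicator (fun _ => (1 : ℝ)) x}
  have hMc : IsCompact M := by
    refine (isCompact_Icc (a := (0 : Set α → ℝ)) (b := 1)).inter_right (t := {c | ∀ x, 1 ≤ ∑ S, c S * S.indicator (fun _ => (1 : ℝ)) x}) ?_
    simp only [ofPred_forall]
    refine isClosed_iInter fun x => isClosed_le continuous_const ?_
    fun_prop
  -- any cover is dominated by an element of M
  have hdom : ∀ t ∈ covVals ψ (fun _ => 1), ∃ d ∈ M, ∑ S, d S * ψ S ≤ t := by
    rintro t ⟨n, c, A, ⟨h1, h2, h3⟩, rfl⟩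
    have hin : ∀ S, 0 ≤ ∑ i with A i = S, c i := fun S => Finset.sum_nonneg fun i _ => h1 i
    have hfib : ∀ F : Set α → ℝ, ∑ S, (∑ i with A i = S, c i) * F S = ∑ i, c i * F (A i) := by
      intro F
      rw [← Finset.sum_fiberwise Finset.univ A (fun i => c i * F (A i))]
      refine Finset.sum_congr rfl fun S _ => ?_
      rw [Finset.sum_mul]
      refine Finset.sum_congr rfl fun i hi => ?_
      rw [(Finset.mem_filter.1 hi).2]
    refine ⟨fun S => min 1 (∑ i with A i = S, c i), ⟨⟨fun S => ?_, fun S => ?_⟩, fun x => ?_⟩, ?_⟩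
    · exact le_min zero_le_one (hin S)
    · exact min_le_left _ _
    · have hind : ∀ S : Set α, 0 ≤ S.indicator (fun _ => (1 : ℝ)) x := fun S =>
        indicator_nonneg (fun _ _ => zero_le_one) x
      by_cases hS : ∃ S, x ∈ S ∧ 1 ≤ ∑ i with A i = S, c i
      · obtain ⟨S, hxS, hS⟩ := hS
        refine le_trans ?_ (Finset.single_le_sum (f := fun S : Set α =>
          (min 1 (∑ i with A i = S, c i)) * S.indicator (fun _ => (1 : ℝ)) x)
          (fun T _ => mul_nonneg (le_min zero_le_one (hin T)) (hind T)) (Finset.mem_univ S))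
        simp [hxS, hS]
      · push Not at hS
        refine (h3 x).trans ?_
        rw [← hfib (fun S => S.indicator (fun _ => (1 : ℝ)) x)]
        refine Finset.sum_le_sum fun S _ => ?_
        by_cases hx : x ∈ S
        · simp only [min_eq_right (hS S hx).le, le_refl]
        · simp [hx]
    · rw [← hfib]
      exact Finset.sum_le_sum fun S _ => mul_le_mul_of_nonneg_right (min_le_right _ _) (hnn S)
  obtain ⟨d0, hd0M, hd0⟩ := hdom t ht
  obtain ⟨c, hcM, hmin⟩ := hMc.exists_isMinOn ⟨d0, hd0M⟩
    (f := fun d : Set α → ℝ => ∑ S, d S * ψ S) (by fun_prop)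
  have hmin' : ∀ d ∈ M, ∑ S, c S * ψ S ≤ ∑ S, d S * ψ S := fun d hd => hmin hd
  obtain ⟨⟨hc0, hc1⟩, hccov⟩ := hcM
  set κ := ∑ S, c S * ψ S with hκdef
  have hκ0 : 0 ≤ κ := Finset.sum_nonneg fun S _ => mul_nonneg (hc0 S) (hnn S)
  obtain ⟨μ, hμ, hadd, hμu⟩ := hb_measure ψ (fun A _ => hnn A) κ hκ0 (fun t ht => by
    obtain ⟨d, hdM, hd⟩ := hdom t ht
    exact (hmin' d hdM).trans hd)
  have hms : ∀ A : Set α, MeasurableSet A := fun A => MeasurableSet.of_discrete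
  have hadd' : ∀ A B, Disjoint A B → μ (A ∪ B) = μ A + μ B := fun A B h => hadd A B (hms A) (hms B) h
  have hμe : μ ∅ = 0 := le_antisymm ((hμ ∅ (hms _)).2.trans hemp.le) (hμ ∅ (hms _)).1
  have hμsum : ∀ F : Finset α, μ (F : Set α) = ∑ x ∈ F, μ {x} := by
    intro F
    induction F using Finset.induction_on with
    | empty => simpa using hμe
    | insert a F ha ih =>
      rw [Finset.sum_insert ha, Finset.coe_insert, insert_eq, hadd' _ _ (by simpa using ha), ih]
  have hμsum' : ∀ A : Set α, μ A = ∑ x, A.indicator (fun _ => (1 : ℝ)) x * μ {x} := by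
    intro A
    have := hμsum A.toFinset
    rw [coe_toFinset] at this
    rw [this]
    simp only [indicator_apply, ite_mul, one_mul, zero_mul]
    rw [← Finset.sum_filter]
    refine Finset.sum_congr ?_ fun _ _ => rfl
    ext x; simp
  have hcov : ∀ E, μ E ≤ ∑ S, c S * μ (E ∩ S) := by
    intro E
    have : ∑ S, c S * μ (E ∩ S) =
        ∑ x, (E.indicator (fun _ => (1 : ℝ)) x * μ {x}) *
          ∑ S, c S * S.indicator (fun _ => (1 : ℝ)) x := by
      simp only [Finset.mul_sum]
      rw [Finset.sum_comm]
      refine Finset.sum_congr rfl fun S _ => ?_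
      rw [hμsum' (E ∩ S), Finset.mul_sum]
      refine Finset.sum_congr rfl fun x _ => ?_
      by_cases h1 : x ∈ E <;> by_cases h2 : x ∈ S <;> simp [h1, h2, mul_comm]
    rw [this, hμsum' E]
    refine Finset.sum_le_sum fun x _ => ?_
    refine le_mul_of_one_le_right (mul_nonneg (indicator_nonneg (fun _ _ => zero_le_one) x) (hμ _ (hms _)).1) (hccov x)
  have hcovu := hcov univ
  simp only [univ_inter, hμu] at hcovu
  have htight : ∀ S, 0 < c S → ψ S = μ S := by
    have hle : ∀ S ∈ Finset.univ, c S * μ S ≤ c S * ψ S := fun S _ =>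
      mul_le_mul_of_nonneg_left (hμ S (hms S)).2 (hc0 S)
    have heq : ∑ S, c S * μ S = ∑ S, c S * ψ S := le_antisymm (Finset.sum_le_sum hle) hcovu
    intro S hS
    have := (Finset.sum_eq_sum_iff_of_le hle).1 heq S (Finset.mem_univ S)
    exact (mul_left_cancel₀ hS.ne' this).symm
  have hpt : ∀ x, ∃ S, x ∈ S ∧ 0 < c S := by
    intro x
    by_contra! hcon
    have h1 := hccov x
    have : ∑ S, c S * S.indicator (fun _ => (1 : ℝ)) x = 0 := by
      refine Finset.sum_eq_zero fun S _ => ?_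
      by_cases hx : x ∈ S
      · rw [le_antisymm (hcon S hx) (hc0 S)]; simp
      · simp [hx]
    linarith
  have hfin := greedy s hs ψ hnn hemp hsub hlow μ (fun A => (hμ A (hms A)).1)
    (fun A => (hμ A (hms A)).2) hadd' c hc0 htight hcov hpt κ
    (Finset.sum_le_sum fun S _ => mul_le_mul_of_nonneg_left (hμ S (hms S)).2 (hc0 S)) univ
  rw [hμu] at hfin
  refine hfin.trans ?_
  have hκt : κ ≤ t := (hmin' d0 hd0M).trans hd0
  have : κ ^ (1 - 1 / s) * κ ^ (1 / s) = κ := by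
    rw [← Real.rpow_add' hκ0 (by norm_num)]
    simp
  rw [mul_assoc, this]
  gcongr

lemma exists_additive {Ω : Type*} [MeasurableSpace Ω] [Nonempty Ω] (s : ℝ) (hs : 1 < s)
    (φ : Set Ω → ℝ) (hnn : ∀ A, 0 ≤ φ A) (hemp : φ ∅ = 0)
    (hsub : ∀ A B, MeasurableSet A → MeasurableSet B → φ (A ∪ B) ≤ φ A + φ B)
    (hlow : ∀ A B, MeasurableSet A → MeasurableSet B → Disjoint A B →
      φ A ^ s + φ B ^ s ≤ φ (A ∪ B) ^ s) :
    ∃ μ : Set Ω → ℝ, (∀ A, MeasurableSet A → 0 ≤ μ A ∧ μ A ≤ φ A) ∧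
      (∀ A B, MeasurableSet A → MeasurableSet B → Disjoint A B → μ (A ∪ B) = μ A + μ B) ∧
      μ univ = φ univ / s ^ (1 + 1 / s) := by
  have hs0 : 0 < s := by linarith
  have hsp : 0 < s ^ (1 + 1 / s) := by positivity
  refine hb_measure φ (fun A _ => hnn A) _ (div_nonneg (hnn _) hsp.le) ?_
  rintro t ⟨n, c, A, ⟨h1, h2, h3⟩, rfl⟩
  rw [div_le_iff₀ hsp, mul_comm]
  let T : Ω → Set (Fin n) := fun x => {i | x ∈ A i}
  let T' : Ω → range T := fun x => ⟨T x, x, rfl⟩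
  classical
  have hT : ∀ t : Set (Fin n), MeasurableSet (T ⁻¹' {t}) := by
    intro t
    have : T ⁻¹' {t} = ⋂ i, (if i ∈ t then A i else (A i)ᶜ) := by
      ext x
      simp only [mem_preimage, mem_singleton_iff, mem_iInter, T, Set.ext_iff, mem_ofPred_eq]
      refine forall_congr' fun i => ?_
      by_cases hi : i ∈ t <;> simp [hi]
    rw [this]
    refine MeasurableSet.iInter fun i => ?_
    split_ifs
    · exact h2 i
    · exact (h2 i).compl
  let : MeasurableSpace (range T) := ⊤
  have : DiscreteMeasurableSpace (range T) := ⟨fun _ => trivial⟩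
  have hT' : ∀ S : Set (range T), MeasurableSet (T' ⁻¹' S) := by
    intro S
    have : T' ⁻¹' S = ⋃ t ∈ S, T ⁻¹' {t.1} := by
      ext x
      simp only [mem_preimage, mem_iUnion, mem_singleton_iff, exists_prop]
      constructor
      · intro h; exact ⟨_, h, rfl⟩
      · rintro ⟨t, ht, h⟩
        have : T' x = t := Subtype.ext h
        rwa [this]
    rw [this]
    exact MeasurableSet.biUnion (to_countable S) fun t _ => hT _
  have : Nonempty (range T) := ⟨T' (Classical.arbitrary Ω)⟩
  have := fin_cover s hs (fun S : Set (range T) => φ (T' ⁻¹' S)) (fun _ => hnn _) (by simpa using hemp)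
    (fun A B => by rw [preimage_union]; exact hsub _ _ (hT' A) (hT' B))
    (fun A B h => by rw [preimage_union]; exact hlow _ _ (hT' A) (hT' B) (h.preimage T'))
    (∑ i, c i * φ (A i)) ⟨n, c, fun i => {t | i ∈ t.1}, ⟨h1, fun _ => trivial, ?_⟩, ?_⟩
  · simpa using this
  · rintro ⟨_, x, rfl⟩
    exact h3 x
  · rfl

lemma mink {ι κ : Type*} (u : Finset ι) (t : Finset κ) (x : ι → κ → ℝ≥0∞) (r : ℝ) (hr : 1 ≤ r) :
    (∑ i ∈ u, (∑ j ∈ t, x i j) ^ r) ^ (1 / r) ≤ ∑ j ∈ t, (∑ i ∈ u, x i j ^ r) ^ (1 / r) := by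
  classical
  have hr0 : 0 < r := by linarith
  induction t using Finset.induction_on with
  | empty => simp [hr0]
  | insert a t ha ih =>
    simp only [Finset.sum_insert ha]
    exact (ENNReal.Lp_add_le u (fun i => x i a) (fun i => ∑ j ∈ t, x i j) hr).trans (by gcongr)

lemma sum_ind {Ω : Type*} {n : ℕ} (g : Ω → ℝ) (B : Fin n → Set Ω)
    (h2 : Pairwise (Function.onFun Disjoint B)) :
    (fun x => ∑ i, (B i).indicator g x) = (⋃ i, B i).indicator g := by
  classical
  ext x
  by_cases hx : x ∈ ⋃ i, B i
  · rw [indicator_of_mem hx]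
    obtain ⟨i, hi⟩ := mem_iUnion.1 hx
    rw [Finset.sum_eq_single i, indicator_of_mem hi]
    · intro j _ hji
      exact indicator_of_notMem (fun hj => disjoint_left.1 (h2 hji) hj hi) g
    · simp
  · rw [indicator_of_notMem hx]
    refine Finset.sum_eq_zero fun i _ => indicator_of_notMem (fun hi => hx (mem_iUnion.2 ⟨i, hi⟩)) g

lemma disjSupp_ind {Ω : Type*} {n : ℕ} (g : Ω → ℝ) (B : Fin n → Set Ω)
    (h2 : Pairwise (Function.onFun Disjoint B)) :
    DisjSupp (fun i => (B i).indicator g) := by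
  intro i j hij x
  by_cases hx : x ∈ B i
  · right; exact indicator_of_notMem (fun hj => disjoint_left.1 (h2 hij) hx hj) g
  · left; exact indicator_of_notMem hx g

section WW
variable {Ω : Type*} [TopologicalSpace Ω] [MeasurableSpace Ω]

/-- the `q`-th power of the renormed functional on `g` restricted to `A` -/
noncomputable def WW (X : AdmissibleQuasinorm Ω) (q : ℝ) (g : Ω → ℝ) (A : Set Ω) : ℝ≥0∞ :=
  ⨆ (n : ℕ) (B : Fin n → Set Ω)
    (_ : (∀ i, MeasurableSet (B i)) ∧ Pairwise (Function.onFun Disjoint B)),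
    ∑ i, X.N ((A ∩ B i).indicator g) ^ q

lemma WW_le_iff (X : AdmissibleQuasinorm Ω) (q : ℝ) (g : Ω → ℝ) (A : Set Ω) (t : ℝ≥0∞) :
    WW X q g A ≤ t ↔ ∀ (n : ℕ) (B : Fin n → Set Ω), (∀ i, MeasurableSet (B i)) →
      Pairwise (Function.onFun Disjoint B) → ∑ i, X.N ((A ∩ B i).indicator g) ^ q ≤ t := by
  simp only [WW, iSup_le_iff, and_imp]

lemma le_WW (X : AdmissibleQuasinorm Ω) (q : ℝ) (g : Ω → ℝ) (A : Set Ω)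
    (n : ℕ) (B : Fin n → Set Ω) (h1 : ∀ i, MeasurableSet (B i))
    (h2 : Pairwise (Function.onFun Disjoint B)) :
    ∑ i, X.N ((A ∩ B i).indicator g) ^ q ≤ WW X q g A :=
  (WW_le_iff X q g A _).1 le_rfl n B h1 h2

lemma WW_mono (X : AdmissibleQuasinorm Ω) (q : ℝ) (hq : 0 < q) (g : Ω → ℝ) (hg : Measurable g)
    (A A' : Set Ω) (hA : MeasurableSet A) (hA' : MeasurableSet A') (h : A ⊆ A') :
    WW X q g A ≤ WW X q g A' := by
  rw [WW_le_iff]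
  intro n B h1 h2
  refine le_trans (Finset.sum_le_sum fun i _ => ?_) (le_WW X q g A' n B h1 h2)
  refine ENNReal.rpow_le_rpow (X.mono _ _ (hg.indicator (hA.inter (h1 i)))
    (hg.indicator (hA'.inter (h1 i))) fun x => ?_) hq.le
  by_cases hx : x ∈ A ∩ B i
  · rw [indicator_of_mem hx, indicator_of_mem (s := A' ∩ B i) ⟨h hx.1, hx.2⟩]
  · rw [indicator_of_notMem hx, abs_zero]; exact abs_nonneg _

lemma WW_scale (X : AdmissibleQuasinorm Ω) (q : ℝ) (hq : 0 < q) (f g : Ω → ℝ) (hf : Measurable f)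
    (hg : Measurable g) (A : Set Ω) (hA : MeasurableSet A) (c : ℝ) (hc : 0 ≤ c)
    (h : ∀ x ∈ A, c * |f x| ≤ |g x|) :
    ENNReal.ofReal c ^ q * WW X q f A ≤ WW X q g A := by
  unfold WW
  simp only [ENNReal.mul_iSup, iSup_le_iff]
  rintro n B ⟨h1, h2⟩
  refine le_trans ?_ (le_WW X q g A n B h1 h2)
  rw [Finset.mul_sum]
  refine Finset.sum_le_sum fun i _ => ?_
  rw [← ENNReal.mul_rpow_of_nonneg _ _ hq.le]
  refine ENNReal.rpow_le_rpow ?_ hq.le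
  have hm := hf.indicator (hA.inter (h1 i))
  have := X.smul c _ hm
  rw [abs_of_nonneg hc] at this
  rw [← this]
  refine X.mono _ _ (hm.const_mul c) (hg.indicator (hA.inter (h1 i))) fun x => ?_
  by_cases hx : x ∈ A ∩ B i
  · rw [indicator_of_mem hx, indicator_of_mem hx, abs_mul, abs_of_nonneg hc]
    exact h x hx.1
  · rw [indicator_of_notMem hx, indicator_of_notMem hx]; simp

lemma WW_super (X : AdmissibleQuasinorm Ω) (q : ℝ) (g : Ω → ℝ)
    (A A' : Set Ω) (hA : MeasurableSet A) (hA' : MeasurableSet A') (hd : Disjoint A A') :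
    WW X q g A + WW X q g A' ≤ WW X q g (A ∪ A') := by
  have key : ∀ (n : ℕ) (B : Fin n → Set Ω), (∀ i, MeasurableSet (B i)) →
      Pairwise (Function.onFun Disjoint B) → ∀ (m : ℕ) (C : Fin m → Set Ω),
      (∀ i, MeasurableSet (C i)) → Pairwise (Function.onFun Disjoint C) →
      ∑ i, X.N ((A ∩ B i).indicator g) ^ q + ∑ i, X.N ((A' ∩ C i).indicator g) ^ q
        ≤ WW X q g (A ∪ A') := by
    intro n B h1 h2 m C k1 k2
    have := le_WW X q g (A ∪ A') (n + m) (Fin.append (fun i => A ∩ B i) (fun i => A' ∩ C i)) ?_ ?_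
    · refine le_trans (le_of_eq ?_) this
      rw [Fin.sum_univ_add]
      simp only [Fin.append_left, Fin.append_right]
      congr 1
      · refine Finset.sum_congr rfl fun i _ => ?_
        congr 3
        ext x; simp; tauto
      · refine Finset.sum_congr rfl fun i _ => ?_
        congr 3
        ext x; simp; tauto
    · intro i
      refine Fin.addCases (fun i => ?_) (fun i => ?_) i
      · simpa using hA.inter (h1 i)
      · simpa using hA'.inter (k1 i)
    · intro i j
      refine Fin.addCases (fun i => ?_) (fun i => ?_) i <;>
      refine Fin.addCases (fun j => ?_) (fun j => ?_) j <;> intro hij <;>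
      simp only [Function.onFun, Fin.append_left, Fin.append_right]
      · exact (h2 (fun h => hij (by rw [h]))).mono inter_subset_right inter_subset_right
      · exact hd.mono inter_subset_left inter_subset_left
      · exact hd.symm.mono inter_subset_left inter_subset_left
      · exact (k2 (fun h => hij (by rw [h]))).mono inter_subset_right inter_subset_right
  conv_lhs => rw [WW, WW]
  refine ENNReal.iSup_add_iSup_le fun n m => ?_
  refine ENNReal.iSup_add_iSup_le fun B C => ?_
  by_cases hB : (∀ i, MeasurableSet (B i)) ∧ Pairwise (Function.onFun Disjoint B)
  · by_cases hC : (∀ i, MeasurableSet (C i)) ∧ Pairwise (Function.onFun Disjoint C)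
    · simpa [hB.1, hB.2, hC.1, hC.2] using key n B hB.1 hB.2 m C hC.1 hC.2
    · rw [iSup_neg hC]
      simpa [hB.1, hB.2] using key n B hB.1 hB.2 0 Fin.elim0 (fun i => i.elim0) (fun i => i.elim0)
  · by_cases hC : (∀ i, MeasurableSet (C i)) ∧ Pairwise (Function.onFun Disjoint C)
    · rw [iSup_neg hB]
      simpa [hC.1, hC.2] using key 0 Fin.elim0 (fun i => i.elim0) (fun i => i.elim0) m C hC.1 hC.2
    · rw [iSup_neg hB, iSup_neg hC]; simp

lemma WW_sum (X : AdmissibleQuasinorm Ω) (q : ℝ) (g : Ω → ℝ) {ι : Type*} (F : Finset ι)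
    (A : ι → Set Ω) (hA : ∀ i, MeasurableSet (A i)) (hd : Pairwise (Function.onFun Disjoint A)) :
    ∑ i ∈ F, WW X q g (A i) ≤ WW X q g (⋃ i ∈ F, A i) := by
  classical
  induction F using Finset.induction_on with
  | empty => simp
  | insert a F ha ih =>
    rw [Finset.sum_insert ha, Finset.set_biUnion_insert]
    refine le_trans (by gcongr) (WW_super X q g _ _ (hA a)
      (Finset.measurableSet_biUnion F fun i _ => hA i) ?_)
    rw [disjoint_iUnion₂_right]
    intro i hi
    exact hd (fun h => ha (h ▸ hi))

lemma WW_le (X : AdmissibleQuasinorm Ω) (q b : ℝ) (hq : 0 < q) (hXb : CrudeLower X q b)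
    (g : Ω → ℝ) (hg : Measurable g) (A : Set Ω) (hA : MeasurableSet A) :
    WW X q g A ≤ (ENNReal.ofReal b * X.N g) ^ q := by
  rw [WW_le_iff]
  intro n B h1 h2
  have hd : Pairwise (Function.onFun Disjoint (fun i => A ∩ B i)) := fun i j hij =>
    (h2 hij).mono inter_subset_right inter_subset_right
  have h3 := hXb n (fun i => (A ∩ B i).indicator g) (fun i => hg.indicator (hA.inter (h1 i)))
    (disjSupp_ind g _ hd)
  rw [sum_ind g _ hd] at h3
  have h4 : X.N ((⋃ i, A ∩ B i).indicator g) ≤ X.N g := by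
    refine X.mono _ _ (hg.indicator (MeasurableSet.iUnion fun i => hA.inter (h1 i))) hg fun x => ?_
    by_cases hx : x ∈ ⋃ i, A ∩ B i
    · rw [indicator_of_mem hx]
    · rw [indicator_of_notMem hx, abs_zero]; exact abs_nonneg _
  have h5 := ENNReal.rpow_le_rpow (h3.trans (by gcongr : _ ≤ ENNReal.ofReal b * X.N g)) hq.le
  rwa [← ENNReal.rpow_mul, one_div, inv_mul_cancel₀ hq.ne', ENNReal.rpow_one] at h5

lemma N_le_WW (X : AdmissibleQuasinorm Ω) (q : ℝ) (g : Ω → ℝ) (A : Set Ω) :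
    X.N (A.indicator g) ^ q ≤ WW X q g A := by
  have := le_WW X q g A 1 (fun _ => univ) (fun _ => MeasurableSet.univ)
    (fun i j hij => absurd (Subsingleton.elim i j) hij)
  simpa using this

lemma WW_upper (X : AdmissibleQuasinorm Ω) (p q a : ℝ) (hp : 0 < p) (hpq : p < q)
    (hXa : CrudeUpper X p a) (f : Ω → ℝ) (hf : Measurable f) (m : ℕ) (A : Fin m → Set Ω)
    (hA : ∀ i, MeasurableSet (A i)) (hd : Pairwise (Function.onFun Disjoint A)) :
    WW X q f (⋃ j, A j) ^ (p / q) ≤ ENNReal.ofReal a ^ p * ∑ j, WW X q f (A j) ^ (p / q) := by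
  have hq : 0 < q := hp.trans hpq
  have hr : 1 ≤ q / p := by rw [le_div_iff₀ hp]; linarith
  have hrinv : 1 / (q / p) = p / q := by field_simp
  suffices h : WW X q f (⋃ j, A j) ≤
      (ENNReal.ofReal a ^ p * ∑ j, WW X q f (A j) ^ (p / q)) ^ (q / p) by
    have h5 := ENNReal.rpow_le_rpow h (div_pos hp hq).le
    rwa [← ENNReal.rpow_mul (y := q / p), div_mul_div_cancel₀ hp.ne', div_self hq.ne', ENNReal.rpow_one] at h5
  rw [WW_le_iff]
  intro n B h1 h2
  have e1 : ∀ i, X.N (((⋃ j, A j) ∩ B i).indicator f) ^ q ≤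
      (∑ j, ENNReal.ofReal a ^ p * X.N ((A j ∩ B i).indicator f) ^ p) ^ (q / p) := by
    intro i
    have hd' : Pairwise (Function.onFun Disjoint (fun j => A j ∩ B i)) := fun j k hij =>
      (hd hij).mono inter_subset_left inter_subset_left
    have h3 := hXa m (fun j => (A j ∩ B i).indicator f)
      (fun j => hf.indicator ((hA j).inter (h1 i))) (disjSupp_ind f _ hd')
    rw [sum_ind f _ hd', ← iUnion_inter] at h3
    have h4 := ENNReal.rpow_le_rpow h3 hq.le
    refine h4.trans (le_of_eq ?_)
    rw [← Finset.mul_sum, ENNReal.mul_rpow_of_nonneg _ _ hq.le,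
      ENNReal.mul_rpow_of_nonneg _ _ (div_pos hq hp).le, ← ENNReal.rpow_mul, ← ENNReal.rpow_mul]
    congr 2 <;> field_simp
  calc _ ≤ ∑ i, (∑ j, ENNReal.ofReal a ^ p * X.N ((A j ∩ B i).indicator f) ^ p) ^ (q / p) :=
        Finset.sum_le_sum fun i _ => e1 i
    _ = ((∑ i, (∑ j, ENNReal.ofReal a ^ p * X.N ((A j ∩ B i).indicator f) ^ p) ^ (q / p))
          ^ (1 / (q / p))) ^ (q / p) := by
        rw [← ENNReal.rpow_mul, one_div, inv_mul_cancel₀ (by positivity), ENNReal.rpow_one]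
    _ ≤ _ := by
        refine ENNReal.rpow_le_rpow ((mink _ _ _ _ hr).trans ?_) (by positivity)
        rw [Finset.mul_sum]
        refine Finset.sum_le_sum fun j _ => ?_
        rw [hrinv]
        have e2 : ∀ i, (ENNReal.ofReal a ^ p * X.N ((A j ∩ B i).indicator f) ^ p) ^ (q / p) =
            ENNReal.ofReal a ^ q * X.N ((A j ∩ B i).indicator f) ^ q := by
          intro i
          rw [ENNReal.mul_rpow_of_nonneg _ _ (div_pos hq hp).le, ← ENNReal.rpow_mul,
            ← ENNReal.rpow_mul, mul_div_cancel₀ _ hp.ne']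
        simp only [e2]
        rw [← Finset.mul_sum, ENNReal.mul_rpow_of_nonneg _ _ (div_pos hp hq).le, ← ENNReal.rpow_mul,
          mul_div_cancel₀ _ hq.ne']
        gcongr
        exact le_WW X q f (A j) n B h1 h2

lemma WW_tendsto_below (X : AdmissibleQuasinorm Ω) (q : ℝ) (hq : 0 < q) (f : Ω → ℝ)
    (hf : Measurable f) (hf0 : ∀ x, 0 ≤ f x) (D : ℕ → Set Ω) (hD : ∀ n, MeasurableSet (D n))
    (hmono : Monotone D) : WW X q f (⋃ n, D n) ≤ ⨆ n, WW X q f (D n) := by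
  rw [WW_le_iff]
  intro n B h1 h2
  have ht : Tendsto (fun k => ∑ i, X.N ((D k ∩ B i).indicator f) ^ q) atTop
      (𝓝 (∑ i, X.N (((⋃ k, D k) ∩ B i).indicator f) ^ q)) := by
    refine tendsto_finsetSum _ fun i _ => ?_
    refine (ENNReal.continuous_rpow_const.tendsto _).comp ?_
    refine X.cont (fun k => (D k ∩ B i).indicator f) _
      (fun k => hf.indicator ((hD k).inter (h1 i)))
      (hf.indicator ((MeasurableSet.iUnion hD).inter (h1 i)))
      (fun k x => indicator_nonneg (fun x _ => hf0 x) x) (fun k x => ?_) (fun x => ?_)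
    · exact indicator_le_indicator_of_subset
        (inter_subset_inter_left _ (hmono (Nat.le_succ k))) hf0 x
    · rw [iUnion_inter]
      by_cases hx : x ∈ ⋃ k, D k ∩ B i
      · obtain ⟨k, hk⟩ := mem_iUnion.1 hx
        refine tendsto_const_nhds.congr' ?_
        filter_upwards [eventually_ge_atTop k] with l hl
        rw [indicator_of_mem hx, indicator_of_mem (s := D l ∩ B i) ⟨hmono hl hk.1, hk.2⟩]
      · refine tendsto_const_nhds.congr fun l => ?_
        rw [indicator_of_notMem hx,
          indicator_of_notMem (fun h => hx (mem_iUnion.2 ⟨l, h⟩))]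
  refine le_of_tendsto ht (Eventually.of_forall fun k => ?_)
  exact (le_WW X q f (D k) n B h1 h2).trans (le_iSup (fun k => WW X q f (D k)) k)

lemma WW_tendsto_zero (X : AdmissibleQuasinorm Ω) (q : ℝ) (hq : 0 < q) (f : Ω → ℝ)
    (hf : Measurable f) (hf0 : ∀ x, 0 ≤ f x) (A : ℕ → Set Ω) (hA : ∀ n, MeasurableSet (A n))
    (hanti : Antitone A) (hemp : ⋂ n, A n = ∅) (hfin : WW X q f univ ≠ ⊤) :
    Tendsto (fun n => WW X q f (A n)) atTop (𝓝 0) := by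
  have h1 := WW_tendsto_below X q hq f hf hf0 (fun n => (A n)ᶜ) (fun n => (hA n).compl)
    (fun m n h => compl_subset_compl.2 (hanti h))
  rw [← compl_iInter, hemp, compl_empty] at h1
  have h2 : Tendsto (fun n => WW X q f ((A n)ᶜ)) atTop (𝓝 (⨆ n, WW X q f ((A n)ᶜ))) :=
    tendsto_atTop_iSup fun m n h => WW_mono X q hq f hf _ _ (hA m).compl (hA n).compl
      (compl_subset_compl.2 (hanti h))
  have h3 : (⨆ n, WW X q f ((A n)ᶜ)) = WW X q f univ := le_antisymm
    (iSup_le fun n => WW_mono X q hq f hf _ _ (hA n).compl MeasurableSet.univ (subset_univ _)) h1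
  rw [h3] at h2
  have h4 : Tendsto (fun n => WW X q f univ - WW X q f ((A n)ᶜ)) atTop
      (𝓝 (WW X q f univ - WW X q f univ)) := ENNReal.Tendsto.sub tendsto_const_nhds h2 (Or.inl hfin)
  rw [tsub_self] at h4
  refine tendsto_of_tendsto_of_tendsto_of_le_of_le tendsto_const_nhds h4 (fun n => zero_le) (fun n => ?_)
  have h5 := WW_super X q f (A n) ((A n)ᶜ) (hA n) (hA n).compl disjoint_compl_right
  rw [union_compl_self] at h5
  have h6 : WW X q f ((A n)ᶜ) ≠ ⊤ := ne_top_of_le_ne_top hfin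
    (WW_mono X q hq f hf _ _ (hA n).compl MeasurableSet.univ (subset_univ _))
  exact ENNReal.le_sub_of_add_le_right h6 h5

end WW

lemma exists_phi {Ω : Type*} [TopologicalSpace Ω] [MeasurableSpace Ω]
    (p q a : ℝ) (hp : 0 < p) (hpq : p < q) (X : AdmissibleQuasinorm Ω)
    (hXa : CrudeUpper X p a) (f : Ω → ℝ) (hf : Measurable f) :
    ∃ φ : Set Ω → ℝ≥0∞, φ ∅ = 0 ∧
      (∀ A B, MeasurableSet A → MeasurableSet B → φ (A ∪ B) ≤ φ A + φ B) ∧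
      (∀ A B, MeasurableSet A → MeasurableSet B → Disjoint A B →
        φ A ^ (q / p) + φ B ^ (q / p) ≤ φ (A ∪ B) ^ (q / p)) ∧
      (∀ A, MeasurableSet A → φ A ≤ WW X q f A ^ (p / q)) ∧
      WW X q f univ ^ (p / q) ≤ ENNReal.ofReal a ^ p * φ univ := by
  have hq : 0 < q := hp.trans hpq
  have hr : 1 ≤ q / p := by rw [le_div_iff₀ hp]; linarith
  have hrinv : 1 / (q / p) = p / q := by field_simp
  let φ : Set Ω → ℝ≥0∞ := fun A => ⨅ (n : ℕ) (C : Fin n → Set Ω)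
    (_ : (∀ i, MeasurableSet (C i)) ∧ A ⊆ ⋃ i, C i), ∑ i, WW X q f (C i) ^ (p / q)
  have φ_le : ∀ A (n : ℕ) (C : Fin n → Set Ω), (∀ i, MeasurableSet (C i)) → A ⊆ ⋃ i, C i →
      φ A ≤ ∑ i, WW X q f (C i) ^ (p / q) := fun A n C h1 h2 =>
    iInf_le_of_le n (iInf_le_of_le C (iInf_le_of_le ⟨h1, h2⟩ le_rfl))
  have le_φ : ∀ A t, (∀ (n : ℕ) (C : Fin n → Set Ω), (∀ i, MeasurableSet (C i)) → A ⊆ ⋃ i, C i →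
      t ≤ ∑ i, WW X q f (C i) ^ (p / q)) → t ≤ φ A := fun A t h =>
    le_iInf fun n => le_iInf fun C => le_iInf fun hC => h n C hC.1 hC.2
  refine ⟨φ, ?_, ?_, ?_, ?_, ?_⟩
  · refine le_antisymm ?_ zero_le
    simpa using φ_le ∅ 0 Fin.elim0 (fun i => i.elim0) (by simp)
  · intro A B hA hB
    refine ENNReal.le_of_forall_pos_le_add ?_ |>.trans le_rfl
    intro ε hε hfin
    have hAf : φ A ≠ ⊤ := ne_top_of_le_ne_top hfin.ne le_self_add
    have hBf : φ B ≠ ⊤ := ne_top_of_le_ne_top hfin.ne le_add_self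
    have hε2 : ((ε : ℝ≥0∞) / 2) ≠ 0 := by simp [hε.ne']
    have h1 : φ A < φ A + ε / 2 := ENNReal.lt_add_right hAf hε2
    have h2 : φ B < φ B + ε / 2 := ENNReal.lt_add_right hBf hε2
    simp only [φ, iInf_lt_iff] at h1 h2
    obtain ⟨n, C, ⟨c1, c2⟩, hC⟩ := h1
    obtain ⟨m, D, ⟨d1, d2⟩, hD⟩ := h2
    have h3 := φ_le (A ∪ B) (n + m) (Fin.append C D) ?_ ?_
    · rw [Fin.sum_univ_add] at h3
      simp only [Fin.append_left, Fin.append_right] at h3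
      refine h3.trans ((add_le_add hC.le hD.le).trans (le_of_eq ?_))
      rw [add_add_add_comm, ENNReal.add_halves]
    · intro i; refine Fin.addCases (fun i => ?_) (fun i => ?_) i <;> simp [c1, d1]
    · refine union_subset (c2.trans ?_) (d2.trans ?_)
      · refine iUnion_subset fun i => ?_
        have := subset_iUnion (Fin.append C D) (Fin.castAdd m i)
        rwa [Fin.append_left] at this
      · refine iUnion_subset fun i => ?_
        have := subset_iUnion (Fin.append C D) (Fin.natAdd n i)
        rwa [Fin.append_right] at this
  · intro A B hA hB hd
    suffices h : (φ A ^ (q / p) + φ B ^ (q / p)) ^ (1 / (q / p)) ≤ φ (A ∪ B) by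
      have h5 := ENNReal.rpow_le_rpow h (show 0 ≤ q / p by positivity)
      rwa [← ENNReal.rpow_mul, one_div, inv_mul_cancel₀ (by positivity), ENNReal.rpow_one] at h5
    refine le_φ _ _ fun n C h1 h2 => ?_
    have hcA := φ_le A n (fun i => C i ∩ A) (fun i => (h1 i).inter hA) (by
      rw [← iUnion_inter]; exact subset_inter (subset_union_left.trans h2) le_rfl)
    have hcB := φ_le B n (fun i => C i ∩ B) (fun i => (h1 i).inter hB) (by
      rw [← iUnion_inter]; exact subset_inter (subset_union_right.trans h2) le_rfl)
    have hm := mink (Finset.univ : Finset (Fin 2)) (Finset.univ : Finset (Fin n))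
      (fun k i => ![WW X q f (C i ∩ A) ^ (p / q), WW X q f (C i ∩ B) ^ (p / q)] k) (q / p) hr
    simp only [Fin.sum_univ_two, Matrix.cons_val_zero, Matrix.cons_val_one] at hm
    refine le_trans (by gcongr) (hm.trans ?_)
    refine Finset.sum_le_sum fun i _ => ?_
    rw [hrinv]
    gcongr
    rw [← ENNReal.rpow_mul, ← ENNReal.rpow_mul, div_mul_div_cancel₀ hq.ne', div_self hp.ne',
      ENNReal.rpow_one, ENNReal.rpow_one]
    refine (WW_super X q f _ _ ((h1 i).inter hA) ((h1 i).inter hB)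
      (hd.mono inter_subset_right inter_subset_right)).trans ?_
    exact WW_mono X q hq f hf _ _ (((h1 i).inter hA).union ((h1 i).inter hB)) (h1 i)
      (union_subset inter_subset_left inter_subset_left)
  · intro A hA
    simpa using φ_le A 1 (fun _ => A) (fun _ => hA) (by simp [iUnion_const])
  · by_cases ha : ENNReal.ofReal a ^ p = 0
    · have := WW_upper X p q a hp hpq hXa f hf 1 (fun _ => univ) (fun _ => MeasurableSet.univ)
        (fun i j hij => absurd (Subsingleton.elim i j) hij)
      rw [ha, zero_mul, iUnion_const] at this
      exact this.trans zero_le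
    have hat : ENNReal.ofReal a ^ p ≠ ⊤ := ENNReal.rpow_ne_top_of_nonneg hp.le ENNReal.ofReal_ne_top
    rw [mul_comm, ← ENNReal.div_le_iff ha hat]
    refine le_φ _ _ fun n C h1 h2 => ?_
    rw [ENNReal.div_le_iff ha hat, mul_comm]
    let D : Fin n → Set Ω := fun i => C i \ ⋃ j ∈ Finset.univ.filter (· < i), C j
    have hDm : ∀ i, MeasurableSet (D i) := fun i =>
      (h1 i).diff (Finset.measurableSet_biUnion _ fun j _ => h1 j)
    have hDlt : ∀ i j, i < j → Disjoint (D i) (D j) := by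
      intro i j hij
      rw [Set.disjoint_left]
      rintro x ⟨hx, -⟩ ⟨-, hx'⟩
      exact hx' (mem_iUnion₂.2 ⟨i, by simpa using hij, hx⟩)
    have hDd : Pairwise (Function.onFun Disjoint D) := by
      intro i j hij
      rcases lt_or_gt_of_ne hij with h | h
      · exact hDlt i j h
      · exact (hDlt j i h).symm
    have hDu : ⋃ i, D i = univ := by
      refine eq_univ_of_forall fun x => ?_
      have hx : ∃ i, x ∈ C i := mem_iUnion.1 (h2 (mem_univ x))
      obtain ⟨i, hi, hmin⟩ := (wellFounded_lt (α := Fin n)).has_min {i | x ∈ C i} hx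
      refine mem_iUnion.2 ⟨i, hi, fun h => ?_⟩
      obtain ⟨j, hj, hxj⟩ := mem_iUnion₂.1 h
      exact hmin j hxj (by simpa using hj)
    have h3 := WW_upper X p q a hp hpq hXa f hf n D hDm hDd
    rw [hDu] at h3
    refine h3.trans ?_
    gcongr with i
    exact WW_mono X q hq f hf _ _ (hDm i) (h1 i) sdiff_subset

lemma K_bounds (s : ℝ) (hs : 1 < s) :
    0 < 2 * ((2 : ℝ) ^ s - 1) ^ (-(1 / s)) - 1 ∧
    2 * ((2 : ℝ) ^ s - 1) ^ (-(1 / s)) - 1 ≤ 1 / s ^ (1 + 1 / s) := by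
  have hs0 : 0 < s := by linarith
  have h2s : 1 + s ≤ (2 : ℝ) ^ s := by
    have := one_add_mul_self_le_rpow_one_add (s := 1) (p := s) (by norm_num) hs.le
    norm_num at this; linarith
  set d : ℝ := (2 : ℝ) ^ s - 1 with hd
  have hd0 : 0 < d := by linarith
  have hroot : d ^ (-(1 / s)) = (d⁻¹) ^ (1 / s) := by
    rw [Real.rpow_neg hd0.le, Real.inv_rpow hd0.le]
  rw [hroot]
  constructor
  · have : (1 / 2 : ℝ) < (d⁻¹) ^ (1 / s) := by
      have h1 : ((1 / 2 : ℝ) ^ s) ^ (1 / s) = 1 / 2 := by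
        rw [← Real.rpow_mul (by norm_num), mul_one_div_cancel hs0.ne', Real.rpow_one]
      rw [← h1]
      refine Real.rpow_lt_rpow (by positivity) ?_ (by positivity)
      rw [one_div, Real.inv_rpow (by norm_num)]
      refine inv_strictAnti₀ hd0 (by linarith)
    linarith
  · set x : ℝ := 1 / s ^ (1 + 1 / s) with hx
    have hx0 : 0 < x := by positivity
    have hsx : s * x = 1 / s ^ (1 / s) := by
      rw [hx, Real.rpow_add hs0, Real.rpow_one]; field_simp
    have hy1 : s ^ (1 / s) ≤ s := by
      conv_rhs => rw [← Real.rpow_one s]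
      exact Real.rpow_le_rpow_of_exponent_le hs.le (by rw [div_le_one hs0]; exact hs.le)
    have hy0 : 0 < s ^ (1 / s) := by positivity
    have hb := one_add_mul_self_le_rpow_one_add (s := x) (p := s) (by linarith) hs.le
    have hkey : (2 : ℝ) ^ s ≤ d * (1 + x) ^ s := by
      refine le_trans ?_ (mul_le_mul_of_nonneg_left hb hd0.le)
      rw [hsx]
      have : (2 : ℝ) ^ s * s ^ (1 / s) ≤ d * (1 + s ^ (1 / s)) := by
        rw [hd]; nlinarith
      have h3 : d * (1 + 1 / s ^ (1 / s)) = d * (1 + s ^ (1 / s)) / s ^ (1 / s) := by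
        field_simp; ring
      rw [h3, le_div_iff₀ hy0]; exact this
    have h4 : d⁻¹ ≤ ((1 + x) / 2) ^ s := by
      rw [Real.div_rpow (by positivity) (by norm_num), inv_eq_one_div, div_le_div_iff₀ hd0 (by positivity)]
      linarith
    have h5 := Real.rpow_le_rpow (by positivity) h4 (show 0 ≤ 1 / s by positivity)
    rw [← Real.rpow_mul (by positivity), mul_one_div_cancel hs0.ne', Real.rpow_one] at h5
    linarith

lemma exists_prob {Ω : Type*} [MeasurableSpace Ω] (ν : Set Ω → ℝ)
    (h0 : ∀ A, MeasurableSet A → 0 ≤ ν A)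
    (hadd : ∀ A B, MeasurableSet A → MeasurableSet B → Disjoint A B → ν (A ∪ B) = ν A + ν B)
    (hpos : 0 < ν univ)
    (hcont : ∀ A : ℕ → Set Ω, (∀ n, MeasurableSet (A n)) → Antitone A → ⋂ n, A n = ∅ →
      Tendsto (fun n => ν (A n)) atTop (𝓝 0)) :
    ∃ μ : Measure Ω, IsProbabilityMeasure μ ∧
      ∀ A, MeasurableSet A → μ A = ENNReal.ofReal (ν A / ν univ) := by
  have hC : IsSetRing {A : Set Ω | MeasurableSet A} :=
    { empty_mem := MeasurableSet.empty
      union_mem := fun _ _ hs ht => MeasurableSet.union hs ht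
      sdiff_mem := fun _ _ hs ht => MeasurableSet.diff hs ht }
  have hemp : ν ∅ = 0 := by
    have := hadd ∅ ∅ MeasurableSet.empty MeasurableSet.empty (disjoint_empty _)
    rw [union_empty] at this; linarith
  let m := IsSetRing.addContent_of_union (fun A => ENNReal.ofReal (ν A / ν univ)) hC
    (by simp [hemp]) (fun {s t} hs ht hd => by
      simp only [hadd s t hs ht hd, add_div]
      exact ENNReal.ofReal_add (div_nonneg (h0 s hs) hpos.le) (div_nonneg (h0 t ht) hpos.le))
  have hsig := addContent_iUnion_eq_sum_of_tendsto_zero hC m (fun s _ => ENNReal.ofReal_ne_top)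
    (fun s hs hanti hinter => by
      have h1 := (hcont s hs hanti hinter).div_const (ν univ)
      rw [zero_div] at h1
      have := ENNReal.tendsto_ofReal h1
      rwa [ENNReal.ofReal_zero] at this)
  let μ : Measure Ω := Measure.ofMeasurable (fun A _ => ENNReal.ofReal (ν A / ν univ))
    (by simp [hemp]) (fun g hg hd => hsig hg (MeasurableSet.iUnion hg) hd)
  have hμ : ∀ A, MeasurableSet A → μ A = ENNReal.ofReal (ν A / ν univ) := fun A hA =>
    Measure.ofMeasurable_apply A hA
  refine ⟨μ, ⟨?_⟩, hμ⟩
  rw [hμ _ MeasurableSet.univ, div_self hpos.ne', ENNReal.ofReal_one]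

lemma const_eq (p q a b K : ℝ) (hp : 0 < p) (hq : 0 < q) (ha : 0 < a) (hb : 0 < b) (hK : 0 < K)
    (N : ℝ≥0∞) :
    (ENNReal.ofReal (a ^ p / K) ^ (q / p) * (ENNReal.ofReal b * N) ^ q) ^ (1 / q) =
      ENNReal.ofReal (a * b * K ^ (-(1 / p))) * N := by
  have hD : 0 < a ^ p / K := div_pos (Real.rpow_pos_of_pos ha p) hK
  rw [ENNReal.mul_rpow_of_nonneg _ _ (by positivity), ← ENNReal.rpow_mul, ← ENNReal.rpow_mul]
  have e1 : q / p * (1 / q) = 1 / p := by field_simp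
  have e2 : q * (1 / q) = 1 := by field_simp
  rw [e1, e2, ENNReal.rpow_one, ENNReal.ofReal_rpow_of_pos hD, ← mul_assoc,
    ← ENNReal.ofReal_mul (by positivity)]
  congr 2
  rw [Real.div_rpow (by positivity) hK.le, ← Real.rpow_mul ha.le, mul_one_div_cancel hp.ne',
    Real.rpow_one, Real.rpow_neg hK.le]
  field_simp

lemma lambda_bound {Ω : Type*} [TopologicalSpace Ω] [MeasurableSpace Ω]
    (p q b : ℝ) (hp : 0 < p) (hq : 0 < q) (X : AdmissibleQuasinorm Ω)
    (hXb : CrudeLower X q b) (f : Ω → ℝ) (hf : Measurable f) (μ : Measure Ω) (D : ℝ≥0∞)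
    (hμ : ∀ A, MeasurableSet A → μ A ≤ D * WW X q f A ^ (p / q))
    (g : Ω → ℝ) (hg : Measurable g) :
    LambdaSup μ p q (fun x => g x / f x) ≤
      (D ^ (q / p) * (ENNReal.ofReal b * X.N g) ^ q) ^ (1 / q) := by
  unfold LambdaSup
  refine iSup_le fun n => iSup_le fun A => iSup_le fun hA => ?_
  refine ENNReal.rpow_le_rpow ?_ (by positivity)
  obtain ⟨hm, hd, -⟩ := hA
  have hterm : ∀ i, (⨅ x ∈ A i, ENNReal.ofReal |g x / f x|) ^ q * μ (A i) ^ (q / p) ≤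
      D ^ (q / p) * WW X q g (A i) := by
    intro i
    rcases (A i).eq_empty_or_nonempty with h | ⟨x0, hx0⟩
    · rw [h, measure_empty, ENNReal.zero_rpow_of_pos (by positivity), mul_zero]
      exact zero_le
    · set I := ⨅ x ∈ A i, ENNReal.ofReal |g x / f x| with hI
      have hle : ∀ x ∈ A i, I ≤ ENNReal.ofReal |g x / f x| := fun x hx => iInf₂_le x hx
      have hfin : I ≠ ⊤ := ne_top_of_le_ne_top ENNReal.ofReal_ne_top (hle x0 hx0)
      have hsc := WW_scale X q hq f g hf hg (A i) (hm i) I.toReal ENNReal.toReal_nonneg (by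
        intro x hx
        have h1 : I.toReal ≤ |g x / f x| :=
          ENNReal.toReal_le_of_le_ofReal (abs_nonneg _) (hle x hx)
        by_cases hfx : f x = 0
        · rw [hfx, abs_zero, mul_zero]; exact abs_nonneg _
        · rw [abs_div] at h1
          rwa [le_div_iff₀ (abs_pos.2 hfx)] at h1)
      rw [ENNReal.ofReal_toReal hfin] at hsc
      have h2 : μ (A i) ^ (q / p) ≤ D ^ (q / p) * WW X q f (A i) := by
        refine le_trans (ENNReal.rpow_le_rpow (hμ _ (hm i)) (by positivity)) (le_of_eq ?_)
        rw [ENNReal.mul_rpow_of_nonneg _ _ (by positivity), ← ENNReal.rpow_mul]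
        have : p / q * (q / p) = 1 := by field_simp
        rw [this, ENNReal.rpow_one]
      calc I ^ q * μ (A i) ^ (q / p) ≤ I ^ q * (D ^ (q / p) * WW X q f (A i)) := by gcongr
        _ = D ^ (q / p) * (I ^ q * WW X q f (A i)) := by ring
        _ ≤ _ := by gcongr
  refine (Finset.sum_le_sum fun i _ => hterm i).trans ?_
  rw [← Finset.mul_sum]
  gcongr
  exact (WW_sum X q g Finset.univ A hm hd).trans
    (WW_le X q b hq hXb g hg _ (MeasurableSet.iUnion fun i => MeasurableSet.iUnion fun _ => hm i))

/-- Let `X` satisfy a crude upper `p`-estimate with constant `a` and a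
crude lower `q`-estimate with constant `b` (`0 < p < q`), and let `f ≥ 0` be Borel with
`‖f‖_X = 1`. Then there is a Borel probability measure `μ` with `f > 0` `μ`-a.e. and
`‖g f⁻¹‖_{Λ_{p,q}(μ)} ≤ a b K_{q/p}^{-1/p} ‖g‖_X` for all Borel `g ∈ X`,
where `K_s = 2(2^s - 1)^{-1/s} - 1`. -/
theorem exists_measure_lambdaSup_bound
    {Ω : Type*} [TopologicalSpace Ω] [CompactSpace Ω] [T2Space Ω]
    [MeasurableSpace Ω] [BorelSpace Ω]
    (p q a b : ℝ) (hp : 0 < p) (hpq : p < q)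
    (X : AdmissibleQuasinorm Ω)
    (hXa : CrudeUpper X p a) (hXb : CrudeLower X q b)
    (f : Ω → ℝ) (hf : Measurable f) (hf0 : ∀ x, 0 ≤ f x) (hfX : X.N f = 1) :
    ∃ μ : Measure Ω, IsProbabilityMeasure μ ∧ (∀ᵐ x ∂μ, 0 < f x) ∧
      ∀ g : Ω → ℝ, Measurable g → X.N g ≠ ⊤ →
        LambdaSup μ p q (fun x => g x / f x) ≤
          ENNReal.ofReal
            (a * b * (2 * ((2 : ℝ) ^ (q / p) - 1) ^ (-(p / q)) - 1) ^ (-(1 / p))) *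
            X.N g := by
  have hq : 0 < q := hp.trans hpq
  have hN0 : X.N (fun _ => 0) = 0 := by
    have := X.smul 0 (fun _ => 0) measurable_const
    simpa using this
  have hne : Nonempty Ω := by
    by_contra h
    rw [not_nonempty_iff] at h
    have : f = fun _ => 0 := funext fun x => h.elim x
    rw [this, hN0] at hfX
    exact zero_ne_one hfX
  have hs : 1 < q / p := (one_lt_div hp).2 hpq
  obtain ⟨hK0, hK1⟩ := K_bounds (q / p) hs
  have hinv : 1 / (q / p) = p / q := one_div_div q p
  set S := (q / p) ^ (1 + 1 / (q / p)) with hS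
  have hSpos : 0 < S := Real.rpow_pos_of_pos (by positivity) _
  rw [hinv] at hK0 hK1
  set K := 2 * ((2 : ℝ) ^ (q / p) - 1) ^ (-(p / q)) - 1 with hK
  obtain ⟨φ, hφ0, hφs, hφl, hφW, hφu⟩ := exists_phi p q a hp hpq X hXa f hf
  have hW1 : 1 ≤ WW X q f univ := by
    have := N_le_WW X q f univ
    rwa [indicator_univ, hfX, ENNReal.one_rpow] at this
  have hWb : ∀ A, MeasurableSet A → WW X q f A ≤ ENNReal.ofReal b ^ q := by
    intro A hA
    have := WW_le X q b hq hXb f hf A hA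
    rwa [hfX, mul_one] at this
  have hWfin : ∀ A, MeasurableSet A → WW X q f A ≠ ⊤ := fun A hA =>
    ne_top_of_le_ne_top (ENNReal.rpow_ne_top_of_nonneg hq.le ENNReal.ofReal_ne_top) (hWb A hA)
  have hWpfin : ∀ A, MeasurableSet A → WW X q f A ^ (p / q) ≠ ⊤ := fun A hA =>
    ENNReal.rpow_ne_top_of_nonneg (by positivity) (hWfin A hA)
  have hφfin : ∀ A, MeasurableSet A → φ A ≠ ⊤ := fun A hA =>
    ne_top_of_le_ne_top (hWpfin A hA) (hφW A hA)
  have hb : 0 < b := by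
    by_contra h
    have := hW1.trans (hWb univ MeasurableSet.univ)
    rw [ENNReal.ofReal_of_nonpos (not_lt.1 h), ENNReal.zero_rpow_of_pos hq] at this
    exact absurd this (by simp)
  have hu1 : 1 ≤ ENNReal.ofReal a ^ p * φ univ := by
    refine le_trans ?_ hφu
    have := ENNReal.rpow_le_rpow hW1 (show 0 ≤ p / q by positivity)
    rwa [ENNReal.one_rpow] at this
  have ha : 0 < a := by
    by_contra h
    rw [ENNReal.ofReal_of_nonpos (not_lt.1 h), ENNReal.zero_rpow_of_pos hp, zero_mul] at hu1
    exact absurd hu1 (by simp)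
  have hu2 : 1 ≤ a ^ p * (φ univ).toReal := by
    have h1 := ENNReal.toReal_mono (ENNReal.mul_ne_top
      (ENNReal.rpow_ne_top_of_nonneg hp.le ENNReal.ofReal_ne_top) (hφfin univ MeasurableSet.univ))
      hu1
    rwa [ENNReal.toReal_one, ENNReal.toReal_mul, ← ENNReal.toReal_rpow,
      ENNReal.toReal_ofReal ha.le] at h1
  have hap : 0 < a ^ p := Real.rpow_pos_of_pos ha p
  have hφpos : 0 < (φ univ).toReal := by
    by_contra h
    have : a ^ p * (φ univ).toReal ≤ 0 := mul_nonpos_of_nonneg_of_nonpos hap.le (not_lt.1 h)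
    linarith
  obtain ⟨ν, hν1, hν2, hν3⟩ := exists_additive (q / p) hs (fun A => (φ A).toReal)
    (fun A => ENNReal.toReal_nonneg) (by simp [hφ0])
    (by
      intro A B hA hB
      have h1 := ENNReal.toReal_mono (ENNReal.add_ne_top.2 ⟨hφfin A hA, hφfin B hB⟩) (hφs A B hA hB)
      rwa [ENNReal.toReal_add (hφfin A hA) (hφfin B hB)] at h1)
    (by
      intro A B hA hB hAB
      have hpw : ∀ C, MeasurableSet C → φ C ^ (q / p) ≠ ⊤ := fun C hC =>
        ENNReal.rpow_ne_top_of_nonneg (by positivity) (hφfin C hC)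
      have h1 := ENNReal.toReal_mono (hpw _ (hA.union hB)) (hφl A B hA hB hAB)
      rwa [ENNReal.toReal_add (hpw A hA) (hpw B hB), ← ENNReal.toReal_rpow, ← ENNReal.toReal_rpow,
        ← ENNReal.toReal_rpow] at h1)
  have hν3' : ν univ = (φ univ).toReal / S := hν3
  have hνpos : 0 < ν univ := by rw [hν3']; positivity
  have hνW : ∀ A, MeasurableSet A → ν A ≤ (WW X q f A ^ (p / q)).toReal := fun A hA =>
    (hν1 A hA).2.trans (ENNReal.toReal_mono (hWpfin A hA) (hφW A hA))
  obtain ⟨μ, hμp, hμ⟩ := exists_prob ν (fun A hA => (hν1 A hA).1) hν2 hνpos (by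
    intro A hA hanti hemp
    have h1 := WW_tendsto_zero X q hq f hf hf0 A hA hanti hemp (hWfin univ MeasurableSet.univ)
    have h2 : Tendsto (fun n => WW X q f (A n) ^ (p / q)) atTop (𝓝 0) := by
      have := (ENNReal.continuous_rpow_const (y := p / q)).tendsto 0 |>.comp h1
      rwa [ENNReal.zero_rpow_of_pos (by positivity)] at this
    have h3 := (ENNReal.tendsto_toReal ENNReal.zero_ne_top).comp h2
    rw [ENNReal.toReal_zero] at h3
    exact squeeze_zero (fun n => (hν1 _ (hA n)).1) (fun n => hνW _ (hA n)) h3)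
  have hμW : ∀ A, MeasurableSet A →
      μ A ≤ ENNReal.ofReal (a ^ p / K) * WW X q f A ^ (p / q) := by
    intro A hA
    rw [hμ A hA]
    calc ENNReal.ofReal (ν A / ν univ)
        ≤ ENNReal.ofReal (a ^ p / K * (WW X q f A ^ (p / q)).toReal) := by
          refine ENNReal.ofReal_le_ofReal ?_
          have h1 : 1 / ν univ ≤ a ^ p / K := by
            rw [hν3', div_le_div_iff₀ (by positivity) hK0, one_mul, ← mul_div_assoc]
            have : K ≤ 1 / S := hK1
            refine this.trans ?_
            gcongr
          have h0 := (hν1 A hA).1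
          calc ν A / ν univ = 1 / ν univ * ν A := by ring
            _ ≤ a ^ p / K * (WW X q f A ^ (p / q)).toReal :=
              mul_le_mul h1 (hνW A hA) h0 (by positivity)
      _ = _ := by
          rw [ENNReal.ofReal_mul (by positivity), ENNReal.ofReal_toReal (hWpfin A hA)]
  refine ⟨μ, hμp, ?_, ?_⟩
  · rw [ae_iff]
    have hZ : MeasurableSet {x | ¬ 0 < f x} := (measurableSet_lt measurable_const hf).compl
    have h1 := WW_scale X q hq f (fun _ => 0) hf measurable_const _ hZ 1 zero_le_one (by
      intro x hx
      have : f x = 0 := le_antisymm (not_lt.1 hx) (hf0 x)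
      simp [this])
    have h2 := WW_le X q b hq hXb (fun _ => 0) measurable_const _ hZ
    rw [hN0, mul_zero, ENNReal.zero_rpow_of_pos hq] at h2
    have h3 := h1.trans h2
    rw [ENNReal.ofReal_one, ENNReal.one_rpow, one_mul] at h3
    have h4 : WW X q f {x | ¬ 0 < f x} = 0 := le_antisymm h3 zero_le
    have h5 := hμW _ hZ
    rw [h4, ENNReal.zero_rpow_of_pos (by positivity), mul_zero] at h5
    exact le_antisymm h5 zero_le
  · intro g hg _
    rw [← const_eq p q a b K hp hq ha hb hK0]
    exact lambda_bound p q b hp hq X hXb f hf μ _ hμW g hg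
end
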